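/- arXiv:1412.2213 — 3 statements merged into one kernel-verified Lean document; each statement's English description precedes it below -/
import Mathlib

section
/- Let X and Y be smooth complex algebraic varieties and let p : P → X and q : Q → Y be Zariski locally trivial 𝐓ⁿ-bundles. If either X or Y is not 𝔸¹*-uniruled, then for every isomorphism of abstract algebraic varieties Φ : P → Q there exists an isomorphism φ : X → Y such that q ∘ Φ = φ ∘ p. In particular, strong cancellation holds for products of algebraic tori 𝐓ⁿ with non-𝔸¹*-uniruled smooth varieties. -/
open AlgebraicGeometry CategoryTheory CategoryTheory.Limits TopologicalSpace

noncomputable section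

/-- `Spec ℂ`, the base point of the category of complex algebraic varieties. -/
abbrev SpecC : Scheme := Spec (CommRingCat.of ℂ)

/-- The Laurent polynomial ring `ℂ[t₁^{±1},…,tₙ^{±1}]`, realised as the group algebra
of the lattice `ℤⁿ` over `ℂ`. -/
abbrev LaurentRing (n : ℕ) : Type := AddMonoidAlgebra ℂ (Fin n → ℤ)

/-- The `n`-dimensional algebraic torus `𝐓ⁿ = Spec ℂ[t₁^{±1},…,tₙ^{±1}]`. -/
abbrev Torus (n : ℕ) : Scheme := Spec (CommRingCat.of (LaurentRing n))

/-- The structure morphism `𝐓ⁿ ⟶ Spec ℂ`. -/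
abbrev Torus.str (n : ℕ) : Torus n ⟶ SpecC :=
  Spec.map (CommRingCat.ofHom (algebraMap ℂ (LaurentRing n)))

/-- `X`, together with the structure morphism `sX : X ⟶ Spec ℂ`, is a complex algebraic
variety: it is integral, separated and of finite type over `ℂ`. -/
def IsVarietyOver {X : Scheme} (sX : X ⟶ SpecC) : Prop :=
  IsIntegral X ∧ IsSeparated sX ∧ LocallyOfFiniteType sX ∧ QuasiCompact sX

/-- The product `X ×_ℂ Y` of two complex varieties. -/
abbrev prodC {X Y : Scheme} (sX : X ⟶ SpecC) (sY : Y ⟶ SpecC) : Scheme := pullback sX sY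

/-- `p : P ⟶ X` is a trivial `𝐓ⁿ`-bundle, i.e. `P` is isomorphic to `X ×_ℂ 𝐓ⁿ` over `X`. -/
def IsTrivialTorusBundle (n : ℕ) {P X : Scheme} (sX : X ⟶ SpecC) (p : P ⟶ X) : Prop :=
  ∃ e : P ≅ pullback sX (Torus.str n), e.hom ≫ pullback.fst sX (Torus.str n) = p

/-- `p : P ⟶ X` is a Zariski locally trivial `𝐓ⁿ`-bundle: every point of `X` has a Zariski
open neighbourhood `U` such that `p⁻¹(U) ≅ U ×_ℂ 𝐓ⁿ` as schemes over `U`. -/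
def IsLocTrivTorusBundle (n : ℕ) {P X : Scheme} (sX : X ⟶ SpecC) (p : P ⟶ X) : Prop :=
  ∀ x : X, ∃ U : X.Opens, x ∈ U ∧
    IsTrivialTorusBundle n (U.ι ≫ sX) (pullback.snd p U.ι)

/-- A scheme is factorial if all of its local rings are unique factorization domains. -/
def IsFactorialScheme (X : Scheme) : Prop :=
  ∀ x : X, ∃ h : IsDomain (X.presheaf.stalk x),
    haveI := h; UniqueFactorizationMonoid (X.presheaf.stalk x)

/-- A morphism is generically finite if it is dominant and finite over a dense open subset
of the target. -/
def IsGenericallyFinite {X Y : Scheme} (f : X ⟶ Y) : Prop :=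
  IsDominant f ∧ ∃ U : Y.Opens, Dense (U : Set Y) ∧ IsFinite (pullback.snd f U.ι)

/-- A complex variety `X` is `𝔸¹⁎`-uniruled if it admits a dominant generically finite
morphism from a variety of the form `Z × 𝔸¹⁎`. -/
def IsA1StarUniruled {X : Scheme} (sX : X ⟶ SpecC) : Prop :=
  ∃ (Z : Scheme) (sZ : Z ⟶ SpecC), IsVarietyOver sZ ∧
    ∃ f : prodC sZ (Torus.str 1) ⟶ X, IsDominant f ∧ IsGenericallyFinite f

section

open scoped Polynomial LaurentPolynomial TensorProduct

/-- In a finite type algebraic extension, a single element of the base serves as denominator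
for integrality of all elements. -/
theorem exists_pow_smul_isIntegral (S C : Type) [CommRing S] [IsDomain S] [CommRing C]
    [Algebra S C] [Algebra.FiniteType S C] [Algebra.IsAlgebraic S C] :
    ∃ s : S, s ≠ 0 ∧ ∀ x : C, ∃ k : ℕ, _root_.IsIntegral S (s ^ k • x) := by
  obtain ⟨G, hG⟩ := Algebra.FiniteType.out (R := S) (A := C)
  obtain ⟨s, hs, hint⟩ := Algebra.IsAlgebraic.exists_integral_multiples S G
  refine ⟨s, hs, fun x ↦ ?_⟩
  have hx : x ∈ Algebra.adjoin S (G : Set C) := hG ▸ Algebra.mem_top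
  induction hx using Algebra.adjoin_induction with
  | mem x hx => exact ⟨1, by simpa using hint x hx⟩
  | algebraMap r => exact ⟨0, by simpa using isIntegral_algebraMap⟩
  | add x y _ _ hx hy =>
    obtain ⟨k, hk⟩ := hx
    obtain ⟨l, hl⟩ := hy
    refine ⟨k + l, ?_⟩
    rw [smul_add]
    refine .add ?_ ?_
    · rw [add_comm, pow_add, mul_smul]; exact hk.smul _
    · rw [pow_add, mul_smul]; exact hl.smul _
  | mul x y _ _ hx hy =>
    obtain ⟨k, hk⟩ := hx
    obtain ⟨l, hl⟩ := hy
    refine ⟨k + l, ?_⟩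
    rw [pow_add, ← smul_mul_smul_comm]
    exact hk.mul hl

theorem isLocalizationAway_map_isIntegral {S C : Type} [CommRing S] [CommRing C]
    [Algebra S C] {s : S} (h : ∀ x : C, ∃ k : ℕ, _root_.IsIntegral S (s ^ k • x))
    (S' C' : Type) [CommRing S'] [CommRing C'] [Algebra S S'] [Algebra C C']
    [IsLocalization.Away s S'] [IsLocalization.Away (algebraMap S C s) C'] :
    (IsLocalization.Away.map S' C' (algebraMap S C) s).IsIntegral := by
  set f := IsLocalization.Away.map S' C' (algebraMap S C) s
  have hfs (x : S) : f (algebraMap S S' x) = algebraMap C C' (algebraMap S C x) := by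
    simp [f, IsLocalization.Away.map]
  have hu : IsUnit (algebraMap S S' s) := IsLocalization.Away.algebraMap_isUnit s
  have base (x : C) (hx : _root_.IsIntegral S x) : f.IsIntegralElem (algebraMap C C' x) := by
    obtain ⟨p, hp, h0⟩ := hx
    refine ⟨p.map (algebraMap S S'), hp.map _, ?_⟩
    rw [Polynomial.eval₂_map]
    have : f.comp (algebraMap S S') = (algebraMap C C').comp (algebraMap S C) :=
      RingHom.ext hfs
    rw [this, ← Polynomial.hom_eval₂, h0, map_zero]
  have h3 : f ((↑hu.unit⁻¹ : S')) * algebraMap C C' (algebraMap S C s) = 1 := by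
    rw [← hfs, ← map_mul]; simp
  have key (x : C) : f.IsIntegralElem (algebraMap C C' x) := by
    obtain ⟨k, hk⟩ := h x
    have h2 : algebraMap C C' x = f ((↑hu.unit⁻¹ : S') ^ k) * algebraMap C C' (s ^ k • x) := by
      rw [Algebra.smul_def, map_mul, ← mul_assoc, map_pow, map_pow, map_pow, ← mul_pow, h3,
        one_pow, one_mul]
    rw [h2]
    exact RingHom.IsIntegralElem.mul f (f.isIntegralElem_map) (base _ hk)
  intro z
  obtain ⟨x, ⟨_, n, rfl⟩, rfl⟩ := IsLocalization.exists_mk'_eq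
    (Submonoid.powers (algebraMap S C s)) z
  have : IsLocalization.mk' C' x ⟨algebraMap S C s ^ n, Submonoid.pow_mem _
      (Submonoid.mem_powers _) n⟩ = f ((↑hu.unit⁻¹ : S') ^ n) * algebraMap C C' x := by
    rw [IsLocalization.mk'_eq_iff_eq_mul]
    simp only [map_pow]
    rw [mul_right_comm, ← mul_pow, h3, one_pow, one_mul]
  exact this ▸ RingHom.IsIntegralElem.mul f (f.isIntegralElem_map) (key x)

/-- Lying over for a generically integral extension. -/
theorem exists_prime_comap_eq {S C : Type} [CommRing S] [CommRing C] [Algebra S C] [FaithfulSMul S C]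
    [IsDomain C] {s : S} (hs : s ≠ 0) (h : ∀ x : C, ∃ k : ℕ, _root_.IsIntegral S (s ^ k • x))
    (q : Ideal S) [q.IsPrime] (hq : s ∉ q) :
    ∃ Q : Ideal C, Q.IsPrime ∧ Q.comap (algebraMap S C) = q := by
  have hinj := FaithfulSMul.algebraMap_injective S C
  have : IsDomain S := hinj.isDomain _
  let S' := Localization.Away s
  let C' := Localization.Away (algebraMap S C s)
  let f := IsLocalization.Away.map S' C' (algebraMap S C) s
  have hfs : f.comp (algebraMap S S') = (algebraMap C C').comp (algebraMap S C) := by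
    ext x; simp [f, IsLocalization.Away.map]
  have hint : f.IsIntegral := isLocalizationAway_map_isIntegral h S' C'
  have hfinj : Function.Injective f := by
    refine IsLocalization.map_injective_of_injective' (M := .powers s) _ _ _ ?_ hinj
    exact fun ⟨n, hn⟩ ↦ pow_ne_zero n ((map_ne_zero_iff _ hinj).mpr hs) hn
  have hdisj : Disjoint (Submonoid.powers s : Set S) q :=
    (Ideal.disjoint_powers_iff_notMem s ‹q.IsPrime›.isRadical).mpr hq
  have hpr : (q.map (algebraMap S S')).IsPrime :=
    IsLocalization.isPrime_of_isPrime_disjoint (.powers s) S' q ‹_› hdisj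
  let : Algebra S' C' := f.toAlgebra
  have : Algebra.IsIntegral S' C' := ⟨hint⟩
  obtain ⟨Q, -, hQ, hQc⟩ := Ideal.exists_ideal_over_prime_of_isIntegral
    (q.map (algebraMap S S')) (⊥ : Ideal C') (by
      exact (Ideal.comap_bot_of_injective f hfinj).trans_le bot_le)
  refine ⟨Q.comap (algebraMap C C'), inferInstance, ?_⟩
  rw [Ideal.comap_comap, ← hfs, ← Ideal.comap_comap]
  change (Q.comap (algebraMap S' C')).comap _ = q
  rw [hQc]
  exact IsLocalization.under_map_of_isPrime_disjoint (.powers s) S' ‹_› hdisj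

/-- Specialization of parameters: a finite type algebra `C` over `A` that is algebraic over `A[R]`
stays a faithful extension of `A`, and becomes algebraic over it, after passing to the quotient by
a suitable prime of `R`. -/
theorem exists_prime_quotient_isAlgebraic (A R C : Type) [CommRing A] [CommRing R] [CommRing C]
    [IsDomain C] [Algebra A C] [Algebra R C] [FaithfulSMul A C] [CharZero A]
    [Algebra.FiniteType A C]
    [Algebra.IsAlgebraic (Algebra.adjoin A (Set.range (algebraMap R C))) C] :
    ∃ p : Ideal R, p.IsPrime ∧ p.map (algebraMap R C) ≠ ⊤ ∧
      Function.Injective (algebraMap A (C ⧸ p.map (algebraMap R C))) ∧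
      Algebra.IsAlgebraic A (C ⧸ p.map (algebraMap R C)) := by
  have hinj := FaithfulSMul.algebraMap_injective A C
  have : IsDomain A := hinj.isDomain _
  obtain ⟨t, hts, ht⟩ := exists_isTranscendenceBasis_subset (R := A) (Set.range (algebraMap R C))
  choose r hr using fun i : t ↦ hts i.2
  let g : MvPolynomial t A →ₐ[A] C := MvPolynomial.aeval ((↑) : t → C)
  algebraize [g.toRingHom]
  have hgm : algebraMap (MvPolynomial t A) C = g.toRingHom := rfl
  have : IsScalarTower A (MvPolynomial t A) C := .of_algebraMap_eq' (by
    rw [hgm]; exact g.comp_algebraMap.symm)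
  have : Algebra.FiniteType (MvPolynomial t A) C := .of_restrictScalars_finiteType A (MvPolynomial t A) C
  have hSinj : Function.Injective (algebraMap (MvPolynomial t A) C) := ht.1
  have : FaithfulSMul (MvPolynomial t A) C := (faithfulSMul_iff_algebraMap_injective _ _).mpr hSinj
  have : Algebra.IsAlgebraic (MvPolynomial t A) C := by
    have := ht.isAlgebraic
    refine ⟨fun x ↦ ?_⟩
    obtain ⟨P, hP, h0⟩ := this.isAlgebraic x
    let e := ht.1.aevalEquiv
    refine ⟨P.map e.symm.toRingHom, ?_, ?_⟩
    · rwa [Ne, Polynomial.map_eq_zero_iff e.symm.injective]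
    · rw [Polynomial.aeval_def, Polynomial.eval₂_map]
      rw [Polynomial.aeval_def] at h0
      have : (algebraMap (MvPolynomial t A) C).comp e.symm.toRingHom =
          algebraMap (Algebra.adjoin A (Set.range ((↑) : t → C))) C := by
        ext z
        obtain ⟨w, rfl⟩ := e.surjective z
        simp [hgm, g, e]
      rw [this]; exact h0
  obtain ⟨s, hs, hsint⟩ := exists_pow_smul_isIntegral (MvPolynomial t A) C
  obtain ⟨c, hc⟩ : ∃ c : t → ℕ, MvPolynomial.eval (fun i ↦ (c i : A)) s ≠ 0 := by
    by_contra! hcon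
    refine hs (MvPolynomial.funext_set (fun _ ↦ Set.range (Nat.cast : ℕ → A))
      (fun _ ↦ Set.infinite_range_of_injective Nat.cast_injective) fun x hx ↦ ?_)
    choose c hc using fun i ↦ hx i trivial
    rw [map_zero, ← hcon c]
    simp [hc]
  let ev : MvPolynomial t A →ₐ[A] A := MvPolynomial.aeval fun i ↦ (c i : A)
  have hev : ev s ≠ 0 := hc
  have : (RingHom.ker ev).IsPrime := RingHom.ker_isPrime _
  obtain ⟨Q, hQ, hQc⟩ := exists_prime_comap_eq hs hsint (RingHom.ker ev) hev
  have hmem (i : t) : r i - c i ∈ Q.comap (algebraMap R C) := by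
    have : (MvPolynomial.X i - MvPolynomial.C (c i : A)) ∈ Q.comap (algebraMap (MvPolynomial t A) C) := by
      rw [hQc, RingHom.mem_ker]; simp [ev]
    rw [Ideal.mem_comap] at this ⊢
    simpa [hr, hgm, g] using this
  set p := Q.comap (algebraMap R C)
  have hpQ : p.map (algebraMap R C) ≤ Q := Ideal.map_comap_le
  refine ⟨p, inferInstance, fun h ↦ hQ.ne_top (top_le_iff.mp (h ▸ hpQ)), ?_, ?_⟩
  · rw [injective_iff_map_eq_zero]
    intro a ha
    have h1 : algebraMap A C a ∈ Q := hpQ (Ideal.Quotient.eq_zero_iff_mem.mp ha)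
    have h2 : algebraMap A (MvPolynomial t A) a ∈ Q.comap (algebraMap (MvPolynomial t A) C) := by
      rwa [Ideal.mem_comap, ← IsScalarTower.algebraMap_apply]
    rw [hQc, RingHom.mem_ker] at h2
    simpa using h2
  · have hπ : (Ideal.Quotient.mkₐ A (p.map (algebraMap R C))).comp g =
        (Algebra.ofId A (C ⧸ p.map (algebraMap R C))).comp ev := by
      ext i
      have : (i : C) - (c i : C) ∈ p.map (algebraMap R C) := by
        simpa [hr] using Ideal.mem_map_of_mem (algebraMap R C) (hmem i)
      simpa [g, ev, sub_eq_zero] using Ideal.Quotient.eq_zero_iff_mem.mpr this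
    have hπ' (x : MvPolynomial t A) : Ideal.Quotient.mk (p.map (algebraMap R C)) (g x) =
        algebraMap A _ (ev x) := DFunLike.congr_fun hπ x
    refine ⟨fun x ↦ ?_⟩
    obtain ⟨x, rfl⟩ := Ideal.Quotient.mk_surjective x
    obtain ⟨k, hk⟩ := hsint x
    refine IsAlgebraic.of_smul (y := ev s ^ k)
      (mem_nonZeroDivisors_of_ne_zero (pow_ne_zero _ hev)) ?_
    refine IsIntegral.isAlgebraic ?_
    have h4 : ev s ^ k • Ideal.Quotient.mk (p.map (algebraMap R C)) x =
        Ideal.Quotient.mk (p.map (algebraMap R C)) (s ^ k • x) := by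
      rw [Algebra.smul_def, Algebra.smul_def, hgm, map_mul, ← map_pow, ← hπ']
      rfl
    rw [h4]
    obtain ⟨P, hP, h0⟩ := hk
    refine ⟨P.map ev.toRingHom, hP.map _, ?_⟩
    rw [Polynomial.eval₂_map]
    have : (algebraMap A (C ⧸ p.map (algebraMap R C))).comp ev.toRingHom =
      (Ideal.Quotient.mk _).comp (algebraMap (MvPolynomial t A) C) := by
      exact RingHom.ext fun x ↦ (hπ' x).symm
    rw [this, ← Polynomial.hom_eval₂, h0, map_zero]

theorem RatFunc.isAlgebraic_of_ne_C {R N B : Type} [CommRing R] [IsDomain R] [Field N] [Algebra R N]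
    [IsFractionRing R N] [CommRing B] [Algebra B (RatFunc N)] [FaithfulSMul B (RatFunc N)]
    (hR : ∀ r : R, ∃ b, algebraMap B (RatFunc N) b = RatFunc.C (algebraMap R N r))
    (z : B) (hz : ∀ c, algebraMap B (RatFunc N) z ≠ RatFunc.C c) :
    Algebra.IsAlgebraic B (RatFunc N) := by
  have hB := FaithfulSMul.algebraMap_injective B (RatFunc N)
  have : IsDomain B := hB.isDomain _
  have hC (c : N) : IsAlgebraic B (RatFunc.C c) := by
    obtain ⟨r, s, hs, rfl⟩ := IsFractionRing.div_surjective R c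
    obtain ⟨b, hb⟩ := hR r
    obtain ⟨b', hb'⟩ := hR s
    rw [map_div₀, ← hb, ← hb', div_eq_mul_inv]
    exact (isAlgebraic_algebraMap b).mul (isAlgebraic_algebraMap b').inv
  have hpol (hX : IsAlgebraic B (RatFunc.X : RatFunc N)) (p : N[X]) :
      IsAlgebraic B (algebraMap N[X] (RatFunc N) p) := by
    induction p using Polynomial.induction_on' with
    | add p q hp hq => rw [map_add]; exact hp.add hq
    | monomial n a =>
      rw [← Polynomial.C_mul_X_pow_eq_monomial, map_mul, map_pow, RatFunc.algebraMap_X,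
        RatFunc.algebraMap_C]
      exact (hC a).mul (hX.pow n)
  suffices hX : IsAlgebraic B (RatFunc.X : RatFunc N) by
    refine ⟨fun y ↦ ?_⟩
    rw [← RatFunc.num_div_denom y, div_eq_mul_inv]
    exact (hpol hX _).mul (hpol hX _).inv
  choose β hβ using hR
  have hβ0 : β 0 = 0 := hB (by simp [hβ])
  obtain ⟨a, ha, hu, hv⟩ : ∃ a : R, algebraMap R N a ≠ 0 ∧
      (∀ i, ∃ u : R, algebraMap R N u = algebraMap R N a * (algebraMap B (RatFunc N) z).num.coeff i) ∧
      (∀ i, ∃ v : R, algebraMap R N v =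
        algebraMap R N a * (algebraMap B (RatFunc N) z).denom.coeff i) := by
    set P := (algebraMap B (RatFunc N) z).num
    set Q := (algebraMap B (RatFunc N) z).denom
    classical
    obtain ⟨⟨b, hb⟩, h⟩ := IsLocalization.exist_integer_multiples_of_finset (nonZeroDivisors R)
      (P.support.image P.coeff ∪ Q.support.image Q.coeff)
    refine ⟨b, IsLocalization.to_map_ne_zero_of_mem_nonZeroDivisors _ le_rfl hb, fun i ↦ ?_,
      fun i ↦ ?_⟩
    · by_cases hi : P.coeff i = 0
      · exact ⟨0, by simp [hi]⟩
      · obtain ⟨u, hu⟩ := h (P.coeff i) (Finset.mem_union_left _ (Finset.mem_image_of_mem _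
          (Polynomial.mem_support_iff.mpr hi)))
        exact ⟨u, by rw [hu, Algebra.smul_def]⟩
    · by_cases hi : Q.coeff i = 0
      · exact ⟨0, by simp [hi]⟩
      · obtain ⟨u, hu⟩ := h (Q.coeff i) (Finset.mem_union_right _ (Finset.mem_image_of_mem _
          (Polynomial.mem_support_iff.mpr hi)))
        exact ⟨u, by rw [hu, Algebra.smul_def]⟩
  choose u hu using hu
  choose v hv using hv
  set P := (algebraMap B (RatFunc N) z).num with hP
  set Q := (algebraMap B (RatFunc N) z).denom with hQ
  have hsum (p : N[X]) (w : ℕ → R) (hw : ∀ i, algebraMap R N (w i) = algebraMap R N a * p.coeff i) :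
      ∑ i ∈ p.support, algebraMap B (RatFunc N) (β (w i)) * RatFunc.X ^ i =
        RatFunc.C (algebraMap R N a) * algebraMap N[X] (RatFunc N) p := by
    conv_rhs => rw [p.as_sum_support_C_mul_X_pow, map_sum, Finset.mul_sum]
    refine Finset.sum_congr rfl fun i _ ↦ ?_
    rw [hβ, hw, map_mul, map_mul, map_pow, RatFunc.algebraMap_X, RatFunc.algebraMap_C, mul_assoc]
  let F : B[X] := ∑ i ∈ Q.support, Polynomial.C (z * β (v i)) * Polynomial.X ^ i -
    ∑ i ∈ P.support, Polynomial.C (β (u i)) * Polynomial.X ^ i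
  refine ⟨F, fun hF ↦ ?_, ?_⟩
  · obtain ⟨i, hi⟩ : ∃ i, Q.coeff i ≠ 0 := by
      by_contra! h
      exact RatFunc.denom_ne_zero (algebraMap B (RatFunc N) z) (Polynomial.ext h)
    have hvi : algebraMap R N (v i) ≠ 0 := by rw [hv]; exact mul_ne_zero ha hi
    have h0 : z * β (v i) = β (u i) := by
      have := congr_arg (Polynomial.coeff · i) hF
      simp only [F, Polynomial.coeff_sub, Polynomial.finsetSum_coeff,
        Polynomial.coeff_C_mul_X_pow, Polynomial.coeff_zero, Finset.sum_ite_eq,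
        Polynomial.mem_support_iff, hi, ne_eq, not_false_eq_true, if_true] at this
      by_cases hPi : P.coeff i = 0
      · have : u i = 0 := by
          have := hu i
          rw [hPi, mul_zero] at this
          exact (map_eq_zero_iff _ (IsFractionRing.injective R N)).mp this
        simp_all
      · simpa [hPi, sub_eq_zero] using this
    refine hz (algebraMap R N (u i) / algebraMap R N (v i)) ?_
    rw [map_div₀, ← hβ, ← hβ, ← h0, map_mul, mul_div_cancel_right₀]
    rw [hβ, Ne, map_eq_zero]
    exact hvi
  · simp only [F, map_sub, map_sum, map_mul, map_pow, Polynomial.aeval_C, Polynomial.aeval_X,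
      mul_assoc]
    rw [← Finset.mul_sum, hsum _ _ hu, hsum _ _ hv, hP, hQ]
    have h1 := RatFunc.num_div_denom (algebraMap B (RatFunc N) z)
    have h2 : algebraMap N[X] (RatFunc N) (algebraMap B (RatFunc N) z).denom ≠ 0 :=
      RatFunc.algebraMap_ne_zero (RatFunc.denom_ne_zero _)
    rw [div_eq_iff h2] at h1
    rw [h1]; ring

/-- The embedding of Laurent polynomials into rational functions. -/
def LaurentPolynomial.toRatFunc {R : Type} (N : Type) [CommRing R] [Field N] [Algebra R N] :
    R[T;T⁻¹] →+* RatFunc N :=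
  LaurentPolynomial.eval₂ (RatFunc.C.comp (algebraMap R N)) (Units.mk0 RatFunc.X RatFunc.X_ne_zero)

theorem LaurentPolynomial.toRatFunc_C {R : Type} (N : Type) [CommRing R] [Field N] [Algebra R N]
    (r : R) : toRatFunc N (C r) = RatFunc.C (algebraMap R N r) := by
  simp [toRatFunc]

theorem LaurentPolynomial.toRatFunc_injective {R : Type} (N : Type) [CommRing R] [Field N]
    [Algebra R N] [FaithfulSMul R N] : Function.Injective (toRatFunc (R := R) N) := by
  rw [injective_iff_map_eq_zero]
  intro f hf
  obtain ⟨n, f', h⟩ := exists_T_pow f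
  have h1 : toRatFunc N (Polynomial.toLaurent f') = algebraMap N[X] _ (f'.map (algebraMap R N)) := by
    rw [toRatFunc, eval₂_toLaurent, ← Polynomial.eval₂_map, Units.val_mk0]
    generalize f'.map (algebraMap R N) = g
    rw [← RatFunc.aeval_X_left_eq_algebraMap, Polynomial.aeval_def]
    rfl
  rw [h, map_mul, hf, zero_mul, eq_comm] at h1
  rw [map_eq_zero_iff _ (RatFunc.algebraMap_injective N),
    Polynomial.map_eq_zero_iff (FaithfulSMul.algebraMap_injective R N)] at h1
  rw [h1, map_zero, eq_comm] at h
  rwa [(isUnit_T _).mul_left_eq_zero] at h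

theorem LaurentPolynomial.lift_eq_C {R N : Type} [CommRing R] [IsDomain R] [Field N] [Algebra R N]
    [IsFractionRing R N] (m : R →+* R[T;T⁻¹])
    (hm : (eval₂ (RingHom.id R) 1).comp m = RingHom.id R) (μ : N →+* RatFunc N)
    (hμ : μ.comp (algebraMap R N) = (toRatFunc N).comp m) (a c : N) (h : μ a = RatFunc.C c) :
    a = c := by
  have hN := IsFractionRing.injective R N
  have : FaithfulSMul R N := (faithfulSMul_iff_algebraMap_injective _ _).mpr hN
  obtain ⟨p, q, hq, rfl⟩ := IsFractionRing.div_surjective R a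
  obtain ⟨r, w, hw, rfl⟩ := IsFractionRing.div_surjective R c
  have hq' : algebraMap R N q ≠ 0 := IsLocalization.to_map_ne_zero_of_mem_nonZeroDivisors _ le_rfl hq
  have hw' : algebraMap R N w ≠ 0 := IsLocalization.to_map_ne_zero_of_mem_nonZeroDivisors _ le_rfl hw
  have hμ' (x : R) : μ (algebraMap R N x) = toRatFunc N (m x) := DFunLike.congr_fun hμ x
  rw [map_div₀, map_div₀, div_eq_div_iff (by simpa using hq') (by simpa using hw'), hμ', hμ',
    ← toRatFunc_C, ← toRatFunc_C, ← map_mul, ← map_mul] at h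
  have h1 := congr_arg (eval₂ (RingHom.id R) 1) (toRatFunc_injective N h)
  have hm' (x : R) : eval₂ (RingHom.id R) 1 (m x) = x := DFunLike.congr_fun hm x
  simp only [map_mul, hm', eval₂_C, RingHom.id_apply] at h1
  rw [div_eq_div_iff hq' hw', ← map_mul, ← map_mul, h1]

/-- Monomial coordinates. -/
abbrev coordMonomial (A : Type) [CommRing A] {n : ℕ} (i : Fin n) : AddMonoidAlgebra A (Fin n → ℤ) :=
  .single (Pi.single i 1) 1

theorem coordMonomial_pow (A : Type) [CommRing A] {n : ℕ} (i : Fin n) (k : ℕ) :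
    coordMonomial A i ^ k = .single (Pi.single i (k : ℤ)) 1 := by
  rw [coordMonomial, AddMonoidAlgebra.single_pow, one_pow, ← Pi.single_smul]; simp

theorem AddMonoidAlgebra.prod_single_piSingle (A : Type) [CommRing A] {n : ℕ} (s : Fin n → ℤ) :
    ∏ i, (single (Pi.single i (s i)) 1 : AddMonoidAlgebra A (Fin n → ℤ)) = single s 1 := by
  conv_rhs => rw [← Finset.univ_sum_single s]
  have := map_prod (of A (Fin n → ℤ)) (fun i ↦ Multiplicative.ofAdd (Pi.single i (s i))) Finset.univ
  rw [← ofAdd_sum] at this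
  exact this.symm

theorem AddMonoidAlgebra.algebraMap_mul_single {A M : Type} [CommRing A] [AddCommMonoid M]
    (s : M) (a : A) : algebraMap A (AddMonoidAlgebra A M) a * single s 1 = single s a := by
  rw [← Algebra.smul_def]; simp

theorem algebraicIndependent_coordMonomial (A : Type) [CommRing A] (n : ℕ) :
    AlgebraicIndependent A (coordMonomial A (n := n)) := by
  have h1 (s : Fin n →₀ ℕ) (a : A) : MvPolynomial.aeval (coordMonomial A (n := n))
      (MvPolynomial.monomial s a) = .single (fun i ↦ (s i : ℤ)) a := by
    rw [MvPolynomial.aeval_monomial, Finsupp.prod_fintype _ _ (by simp)]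
    simp_rw [coordMonomial_pow]
    rw [AddMonoidAlgebra.prod_single_piSingle A fun i ↦ (s i : ℤ),
      AddMonoidAlgebra.algebraMap_mul_single]
  have h2 (p : MvPolynomial (Fin n) A) (s : Fin n →₀ ℕ) :
      (MvPolynomial.aeval (coordMonomial A (n := n)) p).coeff (fun i ↦ (s i : ℤ)) = p.coeff s := by
    induction p using MvPolynomial.induction_on' with
    | monomial t a =>
      classical
      rw [h1, AddMonoidAlgebra.coeff_single, MvPolynomial.coeff_monomial, Finsupp.single_apply]
      refine if_congr ⟨fun h ↦ ?_, fun h ↦ h ▸ rfl⟩ rfl rfl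
      ext i
      exact_mod_cast congr_fun h i
    | add p q hp hq => rw [map_add, AddMonoidAlgebra.coeff_add, Finsupp.add_apply, hp, hq,
        MvPolynomial.coeff_add]
  refine (injective_iff_map_eq_zero _).mpr fun p hp ↦ ?_
  ext s
  rw [← h2, hp]
  simp

theorem isAlgebraic_adjoin_coordMonomial (A : Type) [CommRing A] [IsDomain A] (n : ℕ) :
    Algebra.IsAlgebraic (Algebra.adjoin A (Set.range (coordMonomial A (n := n))))
      (AddMonoidAlgebra A (Fin n → ℤ)) := by
  set S := Algebra.adjoin A (Set.range (coordMonomial A (n := n)))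
  have hmem (i : Fin n) (k : ℕ) : coordMonomial A i ^ k ∈ S :=
    pow_mem (Algebra.subset_adjoin (Set.mem_range_self i)) k
  have hA (a : A) : IsAlgebraic S (algebraMap A (AddMonoidAlgebra A (Fin n → ℤ)) a) :=
    isAlgebraic_algebraMap (algebraMap A S a)
  have hone (i : Fin n) (k : ℤ) :
      IsAlgebraic S (.single (Pi.single i k) 1 : AddMonoidAlgebra A (Fin n → ℤ)) := by
    obtain ⟨k, rfl | rfl⟩ := k.eq_nat_or_neg
    · rw [← coordMonomial_pow]
      exact isAlgebraic_algebraMap (⟨_, hmem i k⟩ : S)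
    · refine ⟨Polynomial.C ⟨_, hmem i k⟩ * Polynomial.X - 1, fun h ↦ ?_, ?_⟩
      · simpa using congr_arg (Polynomial.coeff · 0) h
      · simp only [map_sub, map_mul, Polynomial.aeval_C, Polynomial.aeval_X, map_one, sub_eq_zero]
        change coordMonomial A i ^ k * _ = 1
        rw [coordMonomial_pow, AddMonoidAlgebra.single_mul_single, ← Pi.single_add]
        simp [AddMonoidAlgebra.one_def]
  refine ⟨fun x ↦ ?_⟩
  induction x using AddMonoidAlgebra.induction_linear with
  | zero => exact isAlgebraic_zero
  | add x y hx hy => exact hx.add hy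
  | single s a =>
    rw [← AddMonoidAlgebra.algebraMap_mul_single, ← AddMonoidAlgebra.prod_single_piSingle]
    exact (hA a).mul (Finset.prod_induction _ _ (fun _ _ ↦ IsAlgebraic.mul) isAlgebraic_one
      fun i _ ↦ hone i _)

/-- If `B[ℤⁿ]` embeds over `A` in the fraction field of `A[ℤⁿ]`, then `B` is algebraic
over `A`. -/
theorem isAlgebraic_of_addMonoidAlgebra_injective {A B N : Type} [CommRing A] [IsDomain A]
    [CommRing B] [IsDomain B] [Algebra A B] [Field N] {n : ℕ}
    [Algebra (AddMonoidAlgebra A (Fin n → ℤ)) N] [IsFractionRing (AddMonoidAlgebra A (Fin n → ℤ)) N]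
    (κ : AddMonoidAlgebra B (Fin n → ℤ) →+* N) (hκ : Function.Injective κ)
    (hA : (κ.comp (algebraMap B _)).comp (algebraMap A B) =
      (algebraMap (AddMonoidAlgebra A (Fin n → ℤ)) N).comp (algebraMap A _)) :
    Algebra.IsAlgebraic A B := by
  let := ((algebraMap (AddMonoidAlgebra A (Fin n → ℤ)) N).comp (algebraMap A _)).toAlgebra
  have : IsScalarTower A (AddMonoidAlgebra A (Fin n → ℤ)) N := .of_algebraMap_eq' rfl
  have hinj : Function.Injective (algebraMap A B) := by
    have : Function.Injective ((κ.comp (algebraMap B _)).comp (algebraMap A B)) := by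
      rw [hA]
      exact (IsFractionRing.injective (AddMonoidAlgebra A (Fin n → ℤ)) N).comp
        (FaithfulSMul.algebraMap_injective _ _)
    exact Function.Injective.of_comp (f := κ.comp (algebraMap B _)) this
  have : FaithfulSMul A B := (faithfulSMul_iff_algebraMap_injective _ _).mpr hinj
  let κ' : AddMonoidAlgebra B (Fin n → ℤ) →ₐ[A] N :=
    { κ with commutes' := fun a ↦ DFunLike.congr_fun hA a }
  have h1 : Algebra.trdeg A N ≤ n := by
    have hb : IsTranscendenceBasis A (coordMonomial A (n := n)) :=
      (algebraicIndependent_coordMonomial A n).isTranscendenceBasis_iff_isAlgebraic.mpr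
        (isAlgebraic_adjoin_coordMonomial A n)
    have : Algebra.IsAlgebraic (AddMonoidAlgebra A (Fin n → ℤ)) N :=
      IsLocalization.isAlgebraic N (nonZeroDivisors (AddMonoidAlgebra A (Fin n → ℤ)))
    have : FaithfulSMul (AddMonoidAlgebra A (Fin n → ℤ)) N :=
      (faithfulSMul_iff_algebraMap_injective _ _).mpr (IsFractionRing.injective _ _)
    rw [← hb.algebraMap_comp.cardinalMk_eq_trdeg (A := N)]
    simp
  have h2 : Algebra.trdeg A (AddMonoidAlgebra B (Fin n → ℤ)) ≤ n :=
    (trdeg_le_of_injective κ' hκ).trans h1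
  have h3 : (n : Cardinal) ≤ Algebra.trdeg B (AddMonoidAlgebra B (Fin n → ℤ)) := by
    simpa using (algebraicIndependent_coordMonomial B n).cardinalMk_le_trdeg
  have h4 := trdeg_add_le (R := A) (S := B) (A := AddMonoidAlgebra B (Fin n → ℤ))
  have h5 : Algebra.trdeg A B + n ≤ 0 + n := by
    rw [zero_add]; exact (add_le_add_right h3 _).trans (h4.trans h2)
  rw [← trdeg_eq_zero_iff]
  exact le_antisymm ((Cardinal.add_le_add_iff_of_lt_aleph0 Cardinal.natCast_lt_aleph0).mp h5) bot_le

/-- The morphism of affine schemes attached to an unbundled ring homomorphism. -/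
abbrev specHom {R S : Type} [CommRing R] [CommRing S] (f : R →+* S) :
    Spec (CommRingCat.of S) ⟶ Spec (CommRingCat.of R) :=
  Spec.map (CommRingCat.ofHom f)

section specHom

variable {R S U : Type} [CommRing R] [CommRing S] [CommRing U]

theorem specHom_comp (f : R →+* S) (g : S →+* U) : specHom (g.comp f) = specHom g ≫ specHom f := by
  rw [← Spec.map_comp]; rfl

theorem specHom_id : specHom (RingHom.id R) = 𝟙 _ := Spec.map_id _

theorem exists_specHom_eq (h : Spec (CommRingCat.of S) ⟶ Spec (CommRingCat.of R)) :
    ∃ f : R →+* S, specHom f = h :=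
  ⟨(Spec.preimage h).hom, Spec.map_preimage h⟩

theorem specHom_injective {f g : R →+* S} (h : specHom f = specHom g) : f = g := by
  have := Spec.map_injective h
  exact congr_arg CommRingCat.Hom.hom this

theorem isDominant_specHom {f : R →+* S} (hf : Function.Injective f) : IsDominant (specHom f) := by
  refine ⟨(PrimeSpectrum.denseRange_comap_iff_ker_le_nilRadical f).mpr ?_⟩
  rw [(RingHom.injective_iff_ker_eq_bot f).mp hf]
  exact bot_le

theorem injective_of_isDominant_specHom [IsReduced R] {f : R →+* S} (hf : IsDominant (specHom f)) :
    Function.Injective f := by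
  have := (PrimeSpectrum.denseRange_comap_iff_ker_le_nilRadical f).mp hf.denseRange
  rw [nilradical_eq_zero] at this
  exact (RingHom.injective_iff_ker_eq_bot f).mpr (le_bot_iff.mp this)

end specHom

/-- If the twist of a point of `R` by `m` is algebraic over the constants at the generic point,
then `m` does not move it. -/
theorem specHom_comp_eq_of_const {R N D : Type} [CommRing R] [IsDomain R] [Field N] [Algebra R N]
    [IsFractionRing R N] [CommRing D] {Y : Scheme} [Y.IsSeparated]
    (m : R →+* R[T;T⁻¹])
    (hm : (LaurentPolynomial.eval₂ (RingHom.id R) 1).comp m = RingHom.id R) (μ : N →+* RatFunc N)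
    (hμ : μ.comp (algebraMap R N) = (LaurentPolynomial.toRatFunc N).comp m)
    (G : Spec (.of R) ⟶ Y) (j : Spec (.of D) ⟶ Y) (δ : D →+* N)
    (hG : specHom (algebraMap R N) ≫ G = specHom δ ≫ j)
    (hc : ∀ d, ∃ c, μ (δ d) = RatFunc.C c) :
    specHom m ≫ G = specHom LaurentPolynomial.C ≫ G := by
  have hN := IsFractionRing.injective R N
  have : FaithfulSMul R N := (faithfulSMul_iff_algebraMap_injective _ _).mpr hN
  have h1 : μ.comp δ = RatFunc.C.comp δ := by
    ext d
    obtain ⟨c, hc⟩ := hc d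
    rw [RingHom.comp_apply, hc, RingHom.comp_apply, LaurentPolynomial.lift_eq_C m hm μ hμ _ _ hc]
  have h2 : (LaurentPolynomial.toRatFunc N).comp (LaurentPolynomial.C (R := R)) =
      RatFunc.C.comp (algebraMap R N) :=
    RingHom.ext fun r ↦ LaurentPolynomial.toRatFunc_C N r
  have := isDominant_specHom (LaurentPolynomial.toRatFunc_injective (R := R) N)
  refine ext_of_isDominant (specHom (LaurentPolynomial.toRatFunc (R := R) N)) ?_
  rw [← Category.assoc, ← Category.assoc, ← specHom_comp, ← specHom_comp, ← hμ, h2, specHom_comp,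
    specHom_comp, Category.assoc, Category.assoc, hG, ← Category.assoc, ← Category.assoc,
    ← specHom_comp, ← specHom_comp, h1]

/-- A generically algebraic morphism of finite type from an affine variety is generically finite. -/
theorem isGenericallyFinite_of_isAlgebraic {A K S : Type} [CommRing A] [CommRing K] [IsDomain K]
    [CommRing S] [IsDomain S] [Algebra A S] [FaithfulSMul A S] [Algebra.IsAlgebraic A S]
    {X : Scheme} [IsIntegral X] [X.IsSeparated] (f : Spec (.of K) ⟶ X) [LocallyOfFiniteType f]
    (i : Spec (.of A) ⟶ X) [IsOpenImmersion i] (κ : K →+* S) [IsOpenImmersion (specHom κ)]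
    (h : specHom κ ≫ f = specHom (algebraMap A S) ≫ i) :
    IsGenericallyFinite f := by
  have hinj := FaithfulSMul.algebraMap_injective A S
  have : IsDomain A := hinj.isDomain _
  have hdom : IsDominant f := by
    have := isDominant_specHom hinj
    have : IsDominant i := ⟨i.isOpenEmbedding.isOpen_range.dense (Set.range_nonempty _)⟩
    have : IsDominant (specHom κ ≫ f) := h ▸ inferInstance
    exact .of_comp (specHom κ) f
  refine ⟨hdom, ?_⟩
  have : IsAffineHom f := by
    have : IsAffineHom (f ≫ terminal.from X) := by
      rw [terminal.comp_from]
      infer_instance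
    exact .of_comp f (terminal.from X)
  let W := pullback f i
  have : IsAffine W := isAffine_of_isAffineHom (pullback.snd f i)
  let l : Spec (.of S) ⟶ W := pullback.lift _ _ h
  have : Nonempty W := ⟨l (Nonempty.some inferInstance)⟩
  have : IsIntegral W := isIntegral_of_isOpenImmersion (pullback.fst f i)
  have : IsOpenImmersion l := by
    have hl : l ≫ pullback.fst f i = specHom κ := pullback.lift_fst _ _ _
    have : IsOpenImmersion (l ≫ pullback.fst f i) := hl ▸ inferInstance
    exact .of_comp l (pullback.fst f i)
  have : IsDominant l := ⟨l.isOpenEmbedding.isOpen_range.dense (Set.range_nonempty _)⟩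
  let C : Type := Γ(W, ⊤)
  obtain ⟨φ, hφ⟩ := exists_specHom_eq (R := A) (S := C) (W.isoSpec.inv ≫ pullback.snd f i)
  obtain ⟨ρ, hρ⟩ := exists_specHom_eq (R := C) (S := S) (l ≫ W.isoSpec.hom)
  have hρinj : Function.Injective ρ := injective_of_isDominant_specHom (hρ ▸ inferInstance)
  have hρφ : ρ.comp φ = algebraMap A S := by
    refine specHom_injective ?_
    rw [specHom_comp, hρ, hφ, Category.assoc, Iso.hom_inv_id_assoc]
    exact pullback.lift_snd _ _ _
  algebraize [φ]
  have : Algebra.FiniteType A C := by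
    rw [← RingHom.finiteType_algebraMap]
    have : LocallyOfFiniteType (specHom φ) := hφ ▸ inferInstance
    exact (HasRingHomProperty.Spec_iff (P := @LocallyOfFiniteType)).mp this
  have : Algebra.IsAlgebraic A C := by
    let ρ' : C →ₐ[A] S := { ρ with commutes' := fun a ↦ DFunLike.congr_fun hρφ a }
    exact .of_injective ρ' hρinj
  obtain ⟨s, hs, hint⟩ := exists_pow_smul_isIntegral A C
  let A' := Localization.Away s
  have : Algebra.IsIntegral A' (A' ⊗[A] C) := by
    refine ⟨fun z ↦ ?_⟩
    induction z using TensorProduct.induction_on with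
    | zero => exact isIntegral_zero
    | add x y hx hy => exact hx.add hy
    | tmul x y =>
      obtain ⟨k, hk⟩ := hint y
      have hu : IsUnit (algebraMap A A' (s ^ k)) :=
        map_pow (algebraMap A A') s k ▸ (IsLocalization.Away.algebraMap_isUnit s).pow k
      have : x ⊗ₜ[A] y = (x * (↑hu.unit⁻¹ : A')) ⊗ₜ[A] (s ^ k • y) := by
        rw [← TensorProduct.smul_tmul, Algebra.smul_def, mul_comm x, ← mul_assoc,
          hu.mul_val_inv, one_mul]
      rw [this]
      exact hk.tmul _
  have hfin : IsFinite (specHom (algebraMap A' (A' ⊗[A] C))) := by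
    rw [IsFinite.SpecMap_iff]
    exact RingHom.finite_algebraMap.mpr (Algebra.IsIntegral.finite (R := A') (A := A' ⊗[A] C))
  have hpb : IsPullback
      (specHom (Algebra.TensorProduct.includeRight (R := A) (A := A') (B := C)).toRingHom ≫
        W.isoSpec.inv ≫ pullback.fst f i) (specHom (algebraMap A' (A' ⊗[A] C))) f
      (specHom (algebraMap A A') ≫ i) := by
    have h₁ := (isPullback_SpecMap_of_isPushout _ _ _ _
      (CommRingCat.isPushout_tensorProduct A A' C)).flip
    have h₂ : IsPullback (W.isoSpec.inv ≫ pullback.fst f i) (specHom φ) f i :=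
      (IsPullback.of_hasPullback f i).of_iso W.isoSpec (Iso.refl _) (Iso.refl _) (Iso.refl _)
        (by simp) (by simp [hφ]) (by simp) (by simp)
    exact h₁.paste_horiz h₂
  have : IsDomain A' := IsLocalization.isDomain_localization (powers_le_nonZeroDivisors_of_noZeroDivisors hs)
  let k := specHom (algebraMap A A') ≫ i
  have : IsOpenImmersion (specHom (algebraMap A A')) :=
    IsOpenImmersion.of_isLocalization (f := s)
  have : IsOpenImmersion k := inferInstance
  refine ⟨k.opensRange, k.opensRange.isOpen.dense (Set.range_nonempty k), ?_⟩
  have hpb' : IsPullback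
      (specHom (Algebra.TensorProduct.includeRight (R := A) (A := A') (B := C)).toRingHom ≫
        W.isoSpec.inv ≫ pullback.fst f i)
      (specHom (algebraMap A' (A' ⊗[A] C)) ≫ k.isoOpensRange.hom) f k.opensRange.ι :=
    hpb.of_iso (Iso.refl _) (Iso.refl _) k.isoOpensRange (Iso.refl _) (by simp) (by simp) (by simp)
      (by simp [k])
  rw [show pullback.snd f k.opensRange.ι = hpb'.isoPullback.inv ≫
    specHom (algebraMap A' (A' ⊗[A] C)) ≫ k.isoOpensRange.hom from
      hpb'.isoPullback_inv_snd.symm]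
  infer_instance

theorem AddMonoidAlgebra.ker_mapRingHom_mk_le {R M : Type} [CommRing R] [AddCommMonoid M]
    (p : Ideal R) : RingHom.ker (mapRingHom M (Ideal.Quotient.mk p)) ≤
      p.map (algebraMap R (AddMonoidAlgebra R M)) := by
  intro x hx
  have h (a : M) : x.coeff a ∈ p := by
    have := congr_arg (fun y ↦ y.coeff a) (RingHom.mem_ker.mp hx)
    simpa [Ideal.Quotient.eq_zero_iff_mem] using this
  rw [← AddMonoidAlgebra.sum_coeff_single x]
  refine Ideal.sum_mem _ fun a _ ↦ ?_
  rw [← AddMonoidAlgebra.algebraMap_mul_single]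
  exact Ideal.mul_mem_right _ _ (Ideal.mem_map_of_mem _ (h a))

theorem AddMonoidAlgebra.mapRingHom_mk_surjective {R M : Type} [CommRing R] [AddCommMonoid M]
    (p : Ideal R) : Function.Surjective (mapRingHom M (Ideal.Quotient.mk p)) := by
  intro y
  induction y using AddMonoidAlgebra.induction_linear with
  | zero => exact ⟨0, map_zero _⟩
  | add x y hx hy =>
    obtain ⟨a, rfl⟩ := hx
    obtain ⟨b, rfl⟩ := hy
    exact ⟨a + b, map_add _ _ _⟩
  | single a r =>
    obtain ⟨r, rfl⟩ := Ideal.Quotient.mk_surjective r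
    exact ⟨single a r, by simp⟩

/-- Localization away from an element commutes with reducing the coefficients of a Laurent
polynomial ring. -/
theorem exists_isLocalizationAway_quotient {R S : Type} [CommRing R] [CommRing S]
    [Algebra R[T;T⁻¹] S] [Algebra R S] [IsScalarTower R R[T;T⁻¹] S] (f : R[T;T⁻¹])
    [IsLocalization.Away f S] (p : Ideal R) :
    ∃ κ : (R ⧸ p)[T;T⁻¹] →+* S ⧸ p.map (algebraMap R S),
      κ.comp (AddMonoidAlgebra.mapRingHom ℤ (Ideal.Quotient.mk p)) =
        (Ideal.Quotient.mk _).comp (algebraMap R[T;T⁻¹] S) ∧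
      ∃ g, @IsLocalization.Away _ _ g _ _ κ.toAlgebra := by
  have hI : p.map (algebraMap R S) = (p.map (algebraMap R R[T;T⁻¹])).map (algebraMap R[T;T⁻¹] S) := by
    rw [Ideal.map_map, ← IsScalarTower.algebraMap_eq]
  set π := AddMonoidAlgebra.mapRingHom ℤ (Ideal.Quotient.mk p)
  have hπ : Function.Surjective π := AddMonoidAlgebra.mapRingHom_mk_surjective p
  have hker : RingHom.ker π ≤ _ := AddMonoidAlgebra.ker_mapRingHom_mk_le p
  have hker' : p.map (algebraMap R R[T;T⁻¹]) ≤ RingHom.ker π := by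
    rw [Ideal.map_le_iff_le_comap]
    intro r hr
    have : Ideal.Quotient.mk p r = 0 := Ideal.Quotient.eq_zero_iff_mem.mpr hr
    show π (.single 0 r) = 0
    rw [AddMonoidAlgebra.mapRingHom_single, this, AddMonoidAlgebra.single_zero]
  let g := (Ideal.Quotient.mk (p.map (algebraMap R S))).comp (algebraMap R[T;T⁻¹] S)
  have hg : RingHom.ker π ≤ RingHom.ker g := by
    refine hker.trans fun x hx ↦ ?_
    rw [RingHom.mem_ker, RingHom.comp_apply, Ideal.Quotient.eq_zero_iff_mem, hI]
    exact Ideal.mem_map_of_mem _ hx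
  let κ := π.liftOfSurjective hπ ⟨g, hg⟩
  have hκ : κ.comp π = g := π.liftOfRightInverse_comp _ _ ⟨g, hg⟩
  refine ⟨κ, hκ, π f, ?_⟩
  let := κ.toAlgebra
  have := IsLocalization.of_surjective (Submonoid.powers f) S π hπ (Ideal.Quotient.mk
    (p.map (algebraMap R S))) Ideal.Quotient.mk_surjective hκ.symm (by
      rw [Ideal.mk_ker, hI]
      exact Ideal.map_mono hker')
  rwa [Submonoid.map_powers] at this

theorem AlgebraicGeometry.Scheme.isSeparated_of_spec {X : Scheme} {R : CommRingCat} (s : X ⟶ Spec R)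
    [IsSeparated s] : X.IsSeparated := by
  refine ⟨?_⟩
  rw [← terminal.comp_from s]
  infer_instance

section Torus

open scoped AlgebraMonoidAlgebra

theorem isPullback_torus (B : Type) [CommRing B] [Algebra ℂ B] (n : ℕ) :
    IsPullback (specHom (algebraMap B (AddMonoidAlgebra B (Fin n → ℤ))))
      (specHom (AddMonoidAlgebra.mapRingHom (Fin n → ℤ) (algebraMap ℂ B)))
      (specHom (algebraMap ℂ B)) (Torus.str n) :=
  isPullback_SpecMap_of_isPushout _ _ _ _
    (CommRingCat.isPushout_of_isPushout ℂ B (LaurentRing n) (AddMonoidAlgebra B (Fin n → ℤ)))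

end Torus

theorem IsGenericallyFinite.iso_comp {X X' Y : Scheme} (e : X' ≅ X) {f : X ⟶ Y}
    (hf : IsGenericallyFinite f) : IsGenericallyFinite (e.hom ≫ f) := by
  obtain ⟨_, U, hU, hfin⟩ := hf
  refine ⟨inferInstance, U, hU, ?_⟩
  have h : IsPullback (pullback.fst f U.ι ≫ e.inv) (pullback.snd f U.ι) (e.hom ≫ f) U.ι :=
    (IsPullback.of_hasPullback f U.ι).of_iso (Iso.refl _) e.symm (Iso.refl _) (Iso.refl _)
      (by simp) (by simp) (by simp) (by simp)
  rw [show pullback.snd (e.hom ≫ f) U.ι = h.isoPullback.inv ≫ pullback.snd f U.ι from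
    h.isoPullback_inv_snd.symm]
  infer_instance

theorem isVarietyOver_specHom {B : Type} [CommRing B] [IsDomain B] [Algebra ℂ B]
    [Algebra.FiniteType ℂ B] : IsVarietyOver (specHom (algebraMap ℂ B)) := by
  refine ⟨inferInstance, inferInstance, ?_, inferInstance⟩
  rw [HasRingHomProperty.Spec_iff (P := @LocallyOfFiniteType)]
  exact RingHom.finiteType_algebraMap.mpr inferInstance

theorem isA1StarUniruled_of_laurentPolynomial {X : Scheme} (sX : X ⟶ SpecC) {B : Type} [CommRing B]
    [IsDomain B] [Algebra ℂ B] [Algebra.FiniteType ℂ B] (F : Spec (.of B[T;T⁻¹]) ⟶ X)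
    (hF : IsGenericallyFinite F) : IsA1StarUniruled sX := by
  let e₁ : AddMonoidAlgebra B ℤ ≃ₐ[B] AddMonoidAlgebra B (Fin 1 → ℤ) :=
    AddMonoidAlgebra.domCongr B B (AddEquiv.piUnique (fun _ : Fin 1 ↦ ℤ)).symm
  let e₂ : Spec (.of (AddMonoidAlgebra B (Fin 1 → ℤ))) ≅ Spec (.of B[T;T⁻¹]) :=
    Scheme.Spec.mapIso e₁.toRingEquiv.toCommRingCatIso.op
  have := hF.iso_comp ((isPullback_torus B 1).isoPullback.symm ≪≫ e₂)
  exact ⟨_, _, isVarietyOver_specHom, _, this.1, this⟩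

theorem isA1StarUniruled_of_isAlgebraic {X : Scheme} {sX : X ⟶ SpecC} (hX : IsVarietyOver sX)
    {R S D : Type} [CommRing R] [CommRing S] [IsDomain S] [CommRing D] [Algebra ℂ R]
    [Algebra.FiniteType ℂ R] [Algebra R[T;T⁻¹] S] [Algebra R S] [IsScalarTower R R[T;T⁻¹] S]
    (f : R[T;T⁻¹]) [IsLocalization.Away f S] [Algebra D S] [FaithfulSMul D S]
    [Algebra.IsAlgebraic (Algebra.adjoin D (Set.range (algebraMap R S))) S]
    (F : Spec (.of R[T;T⁻¹]) ⟶ X) [LocallyOfFiniteType F] (j : Spec (.of D) ⟶ X)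
    [IsOpenImmersion j]
    (h : specHom (algebraMap R[T;T⁻¹] S) ≫ F = specHom (algebraMap D S) ≫ j) :
    IsA1StarUniruled sX := by
  obtain ⟨_, _, _, _⟩ := hX
  have := Scheme.isSeparated_of_spec sX
  have : IsOpenImmersion (specHom (algebraMap R[T;T⁻¹] S)) :=
    IsOpenImmersion.of_isLocalization (f := f)
  have hinj := FaithfulSMul.algebraMap_injective D S
  have : IsDomain D := hinj.isDomain _
  have : CharZero D := by
    obtain ⟨c, -⟩ := exists_specHom_eq (j ≫ sX)
    exact charZero_of_injective_ringHom c.injective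
  have : Algebra.FiniteType D S := by
    rw [← RingHom.finiteType_algebraMap]
    have : LocallyOfFiniteType (specHom (algebraMap D S) ≫ j) := h ▸ inferInstance
    have : LocallyOfFiniteType (specHom (algebraMap D S)) := locallyOfFiniteType_of_comp _ j
    exact (HasRingHomProperty.Spec_iff (P := @LocallyOfFiniteType)).mp this
  obtain ⟨p, hp, hne, hinj', halg⟩ := exists_prime_quotient_isAlgebraic D R S
  obtain ⟨κ, hκ, g, hg⟩ := exists_isLocalizationAway_quotient (S := S) f p
  set S' := S ⧸ p.map (algebraMap R S)
  have : Nontrivial S' := Ideal.Quotient.nontrivial_iff.mpr hne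
  have : FaithfulSMul D S' := (faithfulSMul_iff_algebraMap_injective _ _).mpr hinj'
  have : IsDomain (R ⧸ p)[T;T⁻¹] := inferInstance
  algebraize [κ]
  have hg0 : g ≠ 0 := by
    rintro rfl
    have := IsLocalization.Away.algebraMap_isUnit (S := S') (0 : (R ⧸ p)[T;T⁻¹])
    simp at this
  have : IsDomain S' := IsLocalization.isDomain_of_le_nonZeroDivisors _
    (powers_le_nonZeroDivisors_of_noZeroDivisors hg0)
  have : IsOpenImmersion (specHom κ) := IsOpenImmersion.of_isLocalization (f := g)
  set π := AddMonoidAlgebra.mapRingHom ℤ (Ideal.Quotient.mk p)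
  have : IsClosedImmersion (specHom π) :=
    IsClosedImmersion.spec_of_surjective _ (AddMonoidAlgebra.mapRingHom_mk_surjective p)
  refine isA1StarUniruled_of_laurentPolynomial sX (B := R ⧸ p) (specHom π ≫ F)
    (isGenericallyFinite_of_isAlgebraic (A := D) (S := S') _ j κ ?_)
  rw [← Category.assoc, ← specHom_comp, hκ, specHom_comp, Category.assoc, h, ← Category.assoc,
    ← specHom_comp]

theorem AlgebraicGeometry.Scheme.exists_affine_chart {X : Scheme} (U : X.Opens) (x : X)
    (hx : x ∈ U) : ∃ (D : Type) (_ : CommRing D) (j : Spec (.of D) ⟶ X),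
      IsOpenImmersion j ∧ x ∈ Set.range j ∧ Set.range j ⊆ U := by
  obtain ⟨V, hV, hxV, hVU⟩ := exists_isAffineOpen_mem_and_subset hx
  refine ⟨Γ(X, V), inferInstance, hV.fromSpec, hV.isOpenImmersion_fromSpec, ?_⟩
  rw [hV.range_fromSpec]
  exact ⟨hxV, hVU⟩

theorem exists_specHom_comp_eq {X : Scheme} {D N : Type} [CommRing D] [CommRing N]
    (j : Spec (.of D) ⟶ X) [IsOpenImmersion j] (g : Spec (.of N) ⟶ X)
    (h : Set.range g ⊆ Set.range j) : ∃ δ : D →+* N, g = specHom δ ≫ j := by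
  obtain ⟨δ, hδ⟩ := exists_specHom_eq (IsOpenImmersion.lift j g h)
  exact ⟨δ, by rw [hδ, IsOpenImmersion.lift_fac]⟩

theorem exists_specHom_comp_eq_of_field {X : Scheme} {D N : Type} [CommRing D] [Field N]
    (j : Spec (.of D) ⟶ X) [IsOpenImmersion j] (g : Spec (.of N) ⟶ X) (x : Spec (.of N))
    (h : g x ∈ Set.range j) : ∃ δ : D →+* N, g = specHom δ ≫ j := by
  refine exists_specHom_comp_eq j g ?_
  rintro _ ⟨y, rfl⟩
  have : Subsingleton (Spec (.of N)) := inferInstanceAs (Subsingleton (PrimeSpectrum N))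
  rwa [Subsingleton.elim y x]

theorem RatFunc.isAlgebraic_of_injective {R N B S : Type} [CommRing R] [IsDomain R] [Field N]
    [Algebra R N] [IsFractionRing R N] [CommRing B] [CommRing S] [Algebra B S] [FaithfulSMul B S]
    (ν : S →+* RatFunc N) (hν : Function.Injective ν)
    (hR : ∀ r : R, ∃ b : B, ν (algebraMap B S b) = RatFunc.C (algebraMap R N r))
    (z : B) (hz : ∀ c, ν (algebraMap B S z) ≠ RatFunc.C c) : Algebra.IsAlgebraic B S := by
  let := (ν.comp (algebraMap B S)).toAlgebra
  have : FaithfulSMul B (RatFunc N) := (faithfulSMul_iff_algebraMap_injective _ _).mpr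
    (hν.comp (FaithfulSMul.algebraMap_injective B S))
  have := RatFunc.isAlgebraic_of_ne_C hR z hz
  exact .of_injective ({ ν with commutes' := fun _ ↦ rfl } : S →ₐ[B] RatFunc N) hν

/-- A family of endomorphisms over `𝔾ₘ` with identity fibre over `1` extends to the function
field. -/
theorem LaurentPolynomial.exists_ringHom_comp_eq {R : Type} [CommRing R] [IsDomain R] (N : Type)
    [Field N] [Algebra R N] [IsFractionRing R N] (m : R →+* R[T;T⁻¹])
    (hm : (eval₂ (RingHom.id R) 1).comp m = RingHom.id R) :
    ∃ μ : N →+* RatFunc N, μ.comp (algebraMap R N) = (toRatFunc N).comp m := by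
  have : FaithfulSMul R N := (faithfulSMul_iff_algebraMap_injective _ _).mpr
    (IsFractionRing.injective R N)
  have hminj : Function.Injective m :=
    Function.LeftInverse.injective (g := eval₂ (RingHom.id R) 1) (DFunLike.congr_fun hm)
  have h : Function.Injective ((toRatFunc N).comp m) := by
    rw [RingHom.coe_comp]
    exact (toRatFunc_injective N).comp hminj
  refine ⟨IsFractionRing.lift h, RingHom.ext fun r ↦ ?_⟩
  rw [RingHom.comp_apply, IsFractionRing.lift_algebraMap]

/-- A `𝔾ₘ`-action on the source of a dominant morphism to a variety that is not `𝔸¹⁎`-uniruled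
is constant on orbits. -/
theorem specHom_comp_eq_of_not_isA1StarUniruled {X : Scheme} {sX : X ⟶ SpecC}
    (hX : IsVarietyOver sX) (hnur : ¬ IsA1StarUniruled sX) {R : Type} [CommRing R] [IsDomain R]
    [Algebra ℂ R] [Algebra.FiniteType ℂ R] (N : Type) [Field N] [Algebra R N]
    [IsFractionRing R N] (m : R →+* R[T;T⁻¹]) (hmf : m.FiniteType)
    (hm : (LaurentPolynomial.eval₂ (RingHom.id R) 1).comp m = RingHom.id R)
    (G : Spec (.of R) ⟶ X) [IsDominant G] [LocallyOfFiniteType G] :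
    specHom m ≫ G = specHom LaurentPolynomial.C ≫ G := by
  have := hX.1
  have := hX.2.1
  have := Scheme.isSeparated_of_spec sX
  have : FaithfulSMul R N := (faithfulSMul_iff_algebraMap_injective _ _).mpr
    (IsFractionRing.injective R N)
  let τ := LaurentPolynomial.toRatFunc (R := R) N
  have hτ : Function.Injective τ := LaurentPolynomial.toRatFunc_injective N
  obtain ⟨μ, hμ⟩ := LaurentPolynomial.exists_ringHom_comp_eq N m hm
  let x : Spec (.of N) := (⊥ : PrimeSpectrum N)
  obtain ⟨D, _, j, _, hxj, -⟩ := Scheme.exists_affine_chart ⊤ ((specHom (algebraMap R N) ≫ G) x)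
    trivial
  obtain ⟨δ, hδ⟩ := exists_specHom_comp_eq_of_field j _ x hxj
  by_cases hc : ∀ d, ∃ c, μ (δ d) = RatFunc.C c
  · exact specHom_comp_eq_of_const m hm μ hμ G j δ hδ hc
  push Not at hc
  obtain ⟨d, hd⟩ := hc
  refine (hnur ?_).elim
  set F := specHom m ≫ G with hF
  have hτF : specHom τ ≫ F = specHom μ ≫ specHom δ ≫ j := by
    rw [hF, ← Category.assoc, ← specHom_comp, ← hμ, specHom_comp, Category.assoc, hδ]
  have : IsDominant F := by
    have h : specHom (LaurentPolynomial.eval₂ (RingHom.id R) 1) ≫ F = G := by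
      rw [hF, ← Category.assoc, ← specHom_comp, hm, specHom_id, Category.id_comp]
    have : IsDominant (specHom (LaurentPolynomial.eval₂ (RingHom.id R) 1) ≫ F) := h ▸ inferInstance
    exact .of_comp (specHom (LaurentPolynomial.eval₂ (RingHom.id R) 1)) F
  have : LocallyOfFiniteType F := by
    have : LocallyOfFiniteType (specHom m) := by
      rw [HasRingHomProperty.Spec_iff (P := @LocallyOfFiniteType)]
      exact hmf
    infer_instance
  let e : Spec (.of (RatFunc N)) := (⊥ : PrimeSpectrum (RatFunc N))
  have he : specHom τ e ∈ F ⁻¹ᵁ j.opensRange := by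
    show F (specHom τ e) ∈ Set.range j
    rw [← Scheme.Hom.comp_apply, hτF]
    simp
  obtain ⟨_, ⟨f, rfl⟩, hef, hfj⟩ := PrimeSpectrum.isTopologicalBasis_basic_opens
    |>.exists_subset_of_mem_open he (F ⁻¹ᵁ j.opensRange).isOpen
  have hf : τ f ≠ 0 := hef
  let S := Localization.Away f
  have hf0 : f ≠ 0 := by
    rintro rfl
    exact hf (map_zero _)
  have : IsDomain S := IsLocalization.isDomain_localization
    (powers_le_nonZeroDivisors_of_noZeroDivisors hf0)
  have hTS : Function.Injective (algebraMap R[T;T⁻¹] S) := IsLocalization.injective _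
    (powers_le_nonZeroDivisors_of_noZeroDivisors hf0)
  obtain ⟨δ', hδ'⟩ := exists_specHom_comp_eq j (specHom (algebraMap R[T;T⁻¹] S) ≫ F) (by
    rintro _ ⟨y, rfl⟩
    have hy : PrimeSpectrum.comap (algebraMap R[T;T⁻¹] S) y ∈ Set.range
      (PrimeSpectrum.comap (algebraMap R[T;T⁻¹] S)) := Set.mem_range_self _
    rw [PrimeSpectrum.localization_away_comap_range S f] at hy
    exact hfj hy)
  have : IsDomain D := by
    have : Nonempty (Spec (.of D)) := ⟨hxj.choose⟩
    exact (affine_isIntegral_iff (.of D)).mp (isIntegral_of_isOpenImmersion j)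
  have : IsDominant (specHom δ') := by
    have := isDominant_specHom hTS
    have : IsDominant (specHom δ' ≫ j) := hδ' ▸ inferInstance
    exact IsDominant.of_comp_of_isOpenImmersion _ j
  have hδinj : Function.Injective δ' := injective_of_isDominant_specHom this
  let ν : S →+* RatFunc N := IsLocalization.Away.lift f (g := τ) (isUnit_iff_ne_zero.mpr hf)
  have hν : ν.comp (algebraMap R[T;T⁻¹] S) = τ := IsLocalization.Away.lift_comp f _
  have hνinj : Function.Injective ν := by
    rw [injective_iff_map_eq_zero]
    intro a ha
    obtain ⟨⟨r, s⟩, hrs⟩ := IsLocalization.surj (Submonoid.powers f) a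
    have hr : τ r = 0 := by
      rw [← hν, RingHom.comp_apply, ← hrs, map_mul, ha, zero_mul]
    rw [(map_eq_zero_iff τ hτ).mp hr, map_zero] at hrs
    exact (IsLocalization.map_units S s).mul_left_eq_zero.mp hrs
  have hνδ : ν.comp δ' = μ.comp δ := by
    refine specHom_injective ?_
    rw [← cancel_mono j, specHom_comp, specHom_comp, Category.assoc, Category.assoc, ← hτF, ← hδ',
      ← Category.assoc, ← specHom_comp, hν]
  algebraize [δ']
  have : FaithfulSMul D S := (faithfulSMul_iff_algebraMap_injective _ _).mpr hδinj
  have : Algebra.IsAlgebraic (Algebra.adjoin D (Set.range (algebraMap R S))) S := by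
    refine RatFunc.isAlgebraic_of_injective ν hνinj
      (fun r ↦ ⟨⟨_, Algebra.subset_adjoin ⟨r, rfl⟩⟩, ?_⟩) (algebraMap D _ d) fun c ↦ ?_
    · have := DFunLike.congr_fun hν (LaurentPolynomial.C r)
      exact this.trans (LaurentPolynomial.toRatFunc_C N r)
    · exact (DFunLike.congr_fun hνδ d).trans_ne (hd c)
  exact isA1StarUniruled_of_isAlgebraic hX f F j hδ'

namespace AddMonoidAlgebra

variable {B M : Type} [CommRing B] [AddCommGroup M]

/-- The augmentation of a group algebra. -/
def augmentation (B M : Type) [CommRing B] [AddCommGroup M] : AddMonoidAlgebra B M →ₐ[B] B :=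
  AddMonoidAlgebra.lift B B M 1

theorem augmentation_single (s : M) (b : B) : augmentation B M (single s b) = b := by
  simp [augmentation]

/-- The coaction of `𝔾ₘ` on a group algebra with weights given by a character. -/
def coaction (B : Type) [CommRing B] (χ : M →+ ℤ) :
    AddMonoidAlgebra B M →ₐ[B] (AddMonoidAlgebra B M)[T;T⁻¹] :=
  AddMonoidAlgebra.lift B _ M
    { toFun := fun s ↦ single (χ s.toAdd) (single s.toAdd 1)
      map_one' := by
        rw [toAdd_one, map_zero]
        rfl
      map_mul' := fun s t ↦ by
        rw [single_mul_single, single_mul_single, toAdd_mul, map_add, one_mul] }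

theorem coaction_single (χ : M →+ ℤ) (s : M) (b : B) :
    coaction B χ (single s b) = single (χ s) (single s b) := by
  rw [coaction, lift_single, MonoidHom.coe_mk, OneHom.coe_mk, toAdd_ofAdd, smul_single, smul_single,
    smul_eq_mul, mul_one]

theorem eval₂_comp_coaction (χ : M →+ ℤ) :
    (LaurentPolynomial.eval₂ (RingHom.id (AddMonoidAlgebra B M)) 1).comp (coaction B χ).toRingHom =
      RingHom.id _ := by
  have h (s : M) (b : B) : LaurentPolynomial.eval₂ (RingHom.id (AddMonoidAlgebra B M)) 1
      (coaction B χ (single s b)) = single s b := by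
    rw [coaction_single, LaurentPolynomial.single_eq_C_mul_T, LaurentPolynomial.eval₂_C_mul_T,
      one_zpow, Units.val_one, mul_one, RingHom.id_apply]
  exact ringHom_ext (h 0) fun s ↦ h s 1

theorem coaction_finiteType [AddMonoid.FG M] (χ : M →+ ℤ) :
    (coaction B χ).toRingHom.FiniteType := by
  refine RingHom.FiniteType.of_comp_finiteType (f := algebraMap B _) ?_
  rw [AlgHom.toRingHom_eq_coe, AlgHom.comp_algebraMap, RingHom.finiteType_algebraMap]
  have h₁ : Algebra.FiniteType B (AddMonoidAlgebra B M) := inferInstance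
  have h₂ : Algebra.FiniteType (AddMonoidAlgebra B M) (AddMonoidAlgebra B M)[T;T⁻¹] := inferInstance
  exact .trans h₁ h₂

theorem specHom_mapDomainRingHom_comp {X : Scheme} (G : Spec (.of (AddMonoidAlgebra B M)) ⟶ X)
    (χ : M →+ ℤ) (θ : ℤ →+ M)
    (h : specHom (coaction B χ).toRingHom ≫ G = specHom LaurentPolynomial.C ≫ G) :
    specHom (mapDomainRingHom B (AddMonoidHom.id M + θ.comp χ)) ≫ G = G := by
  let ev : (AddMonoidAlgebra B M)[T;T⁻¹] →ₐ[AddMonoidAlgebra B M] AddMonoidAlgebra B M :=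
    AddMonoidAlgebra.lift _ _ ℤ
      { toFun := fun k ↦ single (θ k.toAdd) 1
        map_one' := by simp [one_def]
        map_mul' := fun s t ↦ by simp [single_mul_single] }
  have h₁ : ev.toRingHom.comp (coaction B χ).toRingHom =
      mapDomainRingHom B (AddMonoidHom.id M + θ.comp χ) := by
    have h (s : M) (b : B) : ev (coaction B χ (single s b)) =
        mapDomainRingHom B (AddMonoidHom.id M + θ.comp χ) (single s b) := by
      rw [coaction_single, lift_single, MonoidHom.coe_mk, OneHom.coe_mk, smul_eq_mul,
        single_mul_single]
      simp
    exact ringHom_ext (h 0) fun s ↦ h s 1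
  have h₂ : ev.toRingHom.comp LaurentPolynomial.C = RingHom.id _ := ev.comp_algebraMap
  rw [← h₁, specHom_comp, Category.assoc, h, ← Category.assoc, ← specHom_comp, h₂, specHom_id,
    Category.id_comp]

/-- A morphism from a split torus that is invariant under all coordinate subgroups factors through
the base. -/
theorem specHom_augmentation_comp {n : ℕ} {X : Scheme}
    (G : Spec (.of (AddMonoidAlgebra B (Fin n → ℤ))) ⟶ X)
    (h : ∀ i, specHom (coaction B (Pi.evalAddMonoidHom (fun _ : Fin n ↦ ℤ) i)).toRingHom ≫ G =
      specHom LaurentPolynomial.C ≫ G) :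
    specHom (algebraMap B (AddMonoidAlgebra B (Fin n → ℤ))) ≫
      specHom (augmentation B (Fin n → ℤ)).toRingHom ≫ G = G := by
  have key (t : Finset (Fin n)) : ∃ π : (Fin n → ℤ) →+ (Fin n → ℤ), (∀ s, ∀ i ∈ t, π s i = 0) ∧
      specHom (mapDomainRingHom B π) ≫ G = G := by
    induction t using Finset.induction_on with
    | empty =>
      refine ⟨.id _, by simp, ?_⟩
      rw [mapDomainRingHom_id, specHom_id, Category.id_comp]
    | insert i t hi ih =>
      obtain ⟨π, hπ, hG⟩ := ih
      let θ : ℤ →+ (Fin n → ℤ) := -AddMonoidHom.single (fun _ : Fin n ↦ ℤ) i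
      let π' := AddMonoidHom.id _ + θ.comp (Pi.evalAddMonoidHom (fun _ : Fin n ↦ ℤ) i)
      refine ⟨π'.comp π, fun s j hj ↦ ?_, ?_⟩
      · obtain rfl | hji := eq_or_ne j i
        · simp [π', θ]
        · simp [π', θ, hji, hπ s j (Finset.mem_of_mem_insert_of_ne hj hji)]
      · rw [mapDomainRingHom_comp, specHom_comp, Category.assoc, hG]
        exact specHom_mapDomainRingHom_comp G _ θ (h i)
  obtain ⟨π, hπ, hG⟩ := key Finset.univ
  have hπ' : mapDomainRingHom B π = (algebraMap B _).comp (augmentation B (Fin n → ℤ)).toRingHom := by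
    have h (s : Fin n → ℤ) (b : B) : mapDomainRingHom B π (single s b) =
        algebraMap B _ (augmentation B _ (single s b)) := by
      rw [augmentation_single, mapDomainRingHom_apply, mapDomain_single,
        show π s = 0 from funext fun i ↦ hπ s i (Finset.mem_univ i)]
      rfl
    exact ringHom_ext (h 0) fun s ↦ h s 1
  rw [hπ', specHom_comp, Category.assoc] at hG
  exact hG

end AddMonoidAlgebra

/-- A morphism having sections locally on the target is an epimorphism. -/
theorem AlgebraicGeometry.Scheme.epi_of_local_sections {Y Q : Scheme.{0}} (q : Q ⟶ Y)
    (h : ∀ y : Y, ∃ (U : Scheme.{0}) (u : U ⟶ Y) (s : U ⟶ Q), IsOpenImmersion u ∧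
      y ∈ Set.range u ∧ s ≫ q = u) : Epi q := by
  choose U u s hu hy hs using h
  let 𝒰 : Y.OpenCover := .mkOfCovers Y U u (fun y ↦ ⟨y, hy y⟩) hu
  refine ⟨fun a b hab ↦ ?_⟩
  have hu (y : Y) : u y ≫ a = u y ≫ b := by rw [← hs, Category.assoc, hab, Category.assoc]
  exact Scheme.Cover.hom_ext 𝒰 _ _ hu

/-- If `q` has sections locally on the target, then a morphism that factors through `q` locally on
the target factors through `q`. -/
theorem AlgebraicGeometry.Scheme.exists_comp_eq_of_local_sections {Y Q X : Scheme.{0}} (q : Q ⟶ Y)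
    (H : Q ⟶ X)
    (h : ∀ y : Y, ∃ (U V : Scheme.{0}) (u : U ⟶ Y) (v : V ⟶ Q) (w : V ⟶ U) (s : U ⟶ V),
      IsOpenImmersion u ∧ IsPullback v w q u ∧ y ∈ Set.range u ∧ s ≫ w = 𝟙 U ∧
      w ≫ s ≫ v ≫ H = v ≫ H) : ∃ ψ : Y ⟶ X, q ≫ ψ = H := by
  choose U V u v w s hu hpb hy hs hH using h
  let 𝒰 : Y.OpenCover := .mkOfCovers Y U u (fun y ↦ ⟨y, hy y⟩) hu
  have hcompat (i j : Y) : pullback.fst (u i) (u j) ≫ s i ≫ v i ≫ H =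
      pullback.snd (u i) (u j) ≫ s j ≫ v j ≫ H := by
    have hl : (pullback.snd (u i) (u j) ≫ s j ≫ v j) ≫ q = pullback.fst (u i) (u j) ≫ u i := by
      rw [Category.assoc, Category.assoc, (hpb j).w, reassoc_of% hs j, pullback.condition]
    have h₁ := (hpb i).lift_fst _ _ hl
    have h₂ := (hpb i).lift_snd _ _ hl
    rw [← h₂, Category.assoc, hH, ← Category.assoc, h₁, Category.assoc, Category.assoc]
  have hψ (i : Y) : u i ≫ 𝒰.glueMorphisms (fun i ↦ s i ≫ v i ≫ H) hcompat = s i ≫ v i ≫ H :=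
    𝒰.ι_glueMorphisms _ hcompat i
  generalize Scheme.Cover.glueMorphisms 𝒰 (fun i ↦ s i ≫ v i ≫ H) hcompat = ψ at hψ
  have h (i : Y) : pullback.fst q (u i) ≫ q ≫ ψ = pullback.fst q (u i) ≫ H := by
    rw [pullback.condition_assoc, hψ, ← (hpb i).isoPullback_inv_fst, ← (hpb i).isoPullback_inv_snd,
      Category.assoc, hH, Category.assoc]
  exact ⟨ψ, Scheme.Cover.hom_ext (𝒰.pullback₁ q) _ _ h⟩

/-- A chart of a torus bundle: a trivialization over an affine open subscheme of the base. -/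
structure IsTorusChart (n : ℕ) {P X : Scheme} (p : P ⟶ X) {B : Type} [CommRing B]
    (u : Spec (.of B) ⟶ X) (v : Spec (.of (AddMonoidAlgebra B (Fin n → ℤ))) ⟶ P) : Prop where
  isOpenImmersion : IsOpenImmersion u
  isPullback : IsPullback v (specHom (algebraMap B (AddMonoidAlgebra B (Fin n → ℤ)))) p u

theorem IsLocTrivTorusBundle.exists_isTorusChart {n : ℕ} {P X : Scheme} {sX : X ⟶ SpecC}
    {p : P ⟶ X} (hp : IsLocTrivTorusBundle n sX p) (hX : IsVarietyOver sX) (O : X.Opens) (x : X)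
    (hx : x ∈ O) : ∃ (B : Type) (_ : CommRing B) (_ : IsDomain B) (_ : Algebra ℂ B)
      (u : Spec (.of B) ⟶ X) (v : Spec (.of (AddMonoidAlgebra B (Fin n → ℤ))) ⟶ P),
      Algebra.FiniteType ℂ B ∧ IsTorusChart n p u v ∧ x ∈ Set.range u ∧ Set.range u ⊆ O := by
  have := hX.1
  have := hX.2.2.1
  obtain ⟨U, hxU, e, he⟩ := hp x
  obtain ⟨D, _, u, hu, hxu, hru⟩ := Scheme.exists_affine_chart (U ⊓ O) x ⟨hxU, hx⟩
  let k := IsOpenImmersion.lift U.ι u (by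
    rw [Scheme.Opens.range_ι]
    exact fun y hy ↦ (hru hy).1)
  have hk : k ≫ U.ι = u := IsOpenImmersion.lift_fac _ _ _
  obtain ⟨c, hc⟩ := exists_specHom_eq (u ≫ sX)
  algebraize [c]
  have hD : IsDomain D := by
    have : Nonempty (Spec (CommRingCat.of D)) := ⟨hxu.choose⟩
    exact (affine_isIntegral_iff (.of D)).mp (isIntegral_of_isOpenImmersion u)
  have hft : Algebra.FiniteType ℂ D := by
    have : LocallyOfFiniteType (specHom c) := hc ▸ inferInstance
    exact (HasRingHomProperty.Spec_iff (P := @LocallyOfFiniteType)).mp this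
  have h₁ := (isPullback_torus D n).flip
  rw [show specHom (algebraMap ℂ D) = k ≫ U.ι ≫ sX by rw [reassoc_of% hk]; exact hc] at h₁
  have h₂ : IsPullback (e.hom ≫ pullback.snd _ _) (pullback.snd p U.ι) (Torus.str n) (U.ι ≫ sX) :=
    (IsPullback.of_hasPullback (U.ι ≫ sX) (Torus.str n)).flip.of_iso e.symm (Iso.refl _)
      (Iso.refl _) (Iso.refl _) (by simp) (by simp [← he]) (by simp) (by simp)
  have h₃ := (h₁.of_right' h₂).paste_horiz (.of_hasPullback p U.ι)
  rw [hk] at h₃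
  exact ⟨D, _, hD, _, u, _, hft, ⟨hu, h₃⟩, hxu, fun y hy ↦ (hru hy).2⟩

theorem specHom_augmentation_comp_algebraMap {n : ℕ} (B : Type) [CommRing B] :
    specHom (AddMonoidAlgebra.augmentation B (Fin n → ℤ)).toRingHom ≫
      specHom (algebraMap B (AddMonoidAlgebra B (Fin n → ℤ))) = 𝟙 _ := by
  rw [← specHom_comp, ← specHom_id]
  exact congr_arg specHom (AddMonoidAlgebra.augmentation B (Fin n → ℤ)).comp_algebraMap

theorem specHom_algebraMap_surjective {n : ℕ} (B : Type) [CommRing B] :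
    Function.Surjective (specHom (algebraMap B (AddMonoidAlgebra B (Fin n → ℤ)))) := fun x ↦
  ⟨specHom (AddMonoidAlgebra.augmentation B (Fin n → ℤ)).toRingHom x, by
    rw [← Scheme.Hom.comp_apply, specHom_augmentation_comp_algebraMap, Scheme.Hom.id_base, TopCat.id_app]⟩

namespace IsTorusChart

variable {n : ℕ} {P X : Scheme} {p : P ⟶ X} {B : Type} [CommRing B] {u : Spec (.of B) ⟶ X}
  {v : Spec (.of (AddMonoidAlgebra B (Fin n → ℤ))) ⟶ P}

theorem isOpenImmersion_total (h : IsTorusChart n p u v) : IsOpenImmersion v := by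
  have := h.isOpenImmersion
  rw [← h.isPullback.isoPullback_hom_fst]
  infer_instance

theorem range_total (h : IsTorusChart n p u v) : Set.range v = p ⁻¹' Set.range u := by
  rw [← Scheme.Pullback.range_fst, ← h.isPullback.isoPullback_hom_fst, Scheme.Hom.comp_base,
    TopCat.coe_comp, Set.range_comp, (Surjective.surj (f := h.isPullback.isoPullback.hom)).range_eq,
    Set.image_univ]

end IsTorusChart

namespace IsLocTrivTorusBundle

variable {n : ℕ} {P X : Scheme} {sX : X ⟶ SpecC} {p : P ⟶ X}

theorem epi (hp : IsLocTrivTorusBundle n sX p) (hX : IsVarietyOver sX) : Epi p := by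
  refine Scheme.epi_of_local_sections p fun x ↦ ?_
  obtain ⟨B, _, _, _, u, v, -, h, hx, -⟩ := hp.exists_isTorusChart hX ⊤ x trivial
  refine ⟨_, u, specHom (AddMonoidAlgebra.augmentation B (Fin n → ℤ)).toRingHom ≫ v,
    h.isOpenImmersion, hx, ?_⟩
  rw [Category.assoc, h.isPullback.w, reassoc_of% specHom_augmentation_comp_algebraMap]

theorem locallyOfFiniteType (hp : IsLocTrivTorusBundle n sX p) (hX : IsVarietyOver sX) :
    LocallyOfFiniteType p := by
  have h (y : P) : ∃ (V : Scheme.{0}) (v : V ⟶ P), IsOpenImmersion v ∧ y ∈ Set.range v ∧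
      LocallyOfFiniteType (v ≫ p) := by
    obtain ⟨B, _, _, _, u, v, -, h, hx, -⟩ := hp.exists_isTorusChart hX ⊤ (p y) trivial
    refine ⟨_, v, h.isOpenImmersion_total, h.range_total ▸ hx, ?_⟩
    have := h.isOpenImmersion
    have : LocallyOfFiniteType (specHom (algebraMap B (AddMonoidAlgebra B (Fin n → ℤ)))) := by
      rw [HasRingHomProperty.Spec_iff (P := @LocallyOfFiniteType)]
      exact RingHom.finiteType_algebraMap.mpr inferInstance
    rw [h.isPullback.w]
    infer_instance
  choose V v hv hy hft using h
  have : IsZariskiLocalAtSource @LocallyOfFiniteType :=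
    HasRingHomProperty.instIsZariskiLocalAtSource (Q := RingHom.FiniteType)
  exact IsZariskiLocalAtSource.of_openCover (P := @LocallyOfFiniteType)
    (Scheme.Cover.mkOfCovers P V v (fun y ↦ ⟨y, hy y⟩) hv : P.OpenCover) hft

theorem surjective (hp : IsLocTrivTorusBundle n sX p) (hX : IsVarietyOver sX) :
    Surjective p := by
  refine ⟨fun x ↦ ?_⟩
  obtain ⟨B, _, _, _, u, v, -, h, ⟨z, rfl⟩, -⟩ := hp.exists_isTorusChart hX ⊤ x trivial
  obtain ⟨w, rfl⟩ := specHom_algebraMap_surjective (n := n) B z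
  exact ⟨v w, by rw [← Scheme.Hom.comp_apply, h.isPullback.w, Scheme.Hom.comp_apply]⟩

theorem isDominant_of_isTorusChart (hp : IsLocTrivTorusBundle n sX p) (hX : IsVarietyOver sX)
    {B : Type} [CommRing B] [Nontrivial B] {u : Spec (.of B) ⟶ X}
    {v : Spec (.of (AddMonoidAlgebra B (Fin n → ℤ))) ⟶ P} (h : IsTorusChart n p u v) :
    IsDominant v := by
  have := hX.1
  refine ⟨dense_iff_inter_open.mpr fun W hW ⟨y, hy⟩ ↦ ?_⟩
  obtain ⟨B', _, _, _, u', v', -, h', hy', -⟩ := hp.exists_isTorusChart hX ⊤ (p y) trivial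
  have := h.isOpenImmersion
  have := h'.isOpenImmersion
  obtain ⟨_, ⟨a, rfl⟩, b, hb⟩ := nonempty_preirreducible_inter u.isOpenEmbedding.isOpen_range
    u'.isOpenEmbedding.isOpen_range (Set.range_nonempty u) (Set.range_nonempty u')
  obtain ⟨b, rfl⟩ := specHom_algebraMap_surjective (n := n) B' b
  obtain ⟨y', rfl⟩ : y ∈ Set.range v' := h'.range_total ▸ hy'
  have hb' : v' b ∈ Set.range v := by
    rw [h.range_total]
    exact ⟨a, by rw [← hb, ← Scheme.Hom.comp_apply, ← h'.isPullback.w, Scheme.Hom.comp_apply]⟩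
  have := h.isOpenImmersion_total
  obtain ⟨z, hz, hz'⟩ := nonempty_preirreducible_inter (hW.preimage v'.continuous)
    (v.isOpenEmbedding.isOpen_range.preimage v'.continuous) ⟨y', hy⟩ ⟨b, hb'⟩
  exact ⟨v' z, hz, hz'⟩

end IsLocTrivTorusBundle

/-- A morphism from a torus bundle that is invariant on the charts under all coordinate subgroups of
the torus factors through the base. -/
theorem IsTorusChart.exists_comp_eq {n : ℕ} {P X Y : Scheme} {p : P ⟶ X} (H : P ⟶ Y)
    (hH : ∀ x : X, ∃ (B : Type) (_ : CommRing B) (u : Spec (.of B) ⟶ X)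
      (v : Spec (.of (AddMonoidAlgebra B (Fin n → ℤ))) ⟶ P), IsTorusChart n p u v ∧
      x ∈ Set.range u ∧ ∀ i, specHom (AddMonoidAlgebra.coaction B
        (Pi.evalAddMonoidHom (fun _ : Fin n ↦ ℤ) i)).toRingHom ≫ v ≫ H =
          specHom LaurentPolynomial.C ≫ v ≫ H) : ∃ ψ : X ⟶ Y, p ≫ ψ = H := by
  refine Scheme.exists_comp_eq_of_local_sections p H fun x ↦ ?_
  obtain ⟨B, _, u, v, h, hx, hv⟩ := hH x
  exact ⟨_, _, u, v, _, _, h.isOpenImmersion, h.isPullback, hx,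
    specHom_augmentation_comp_algebraMap B, AddMonoidAlgebra.specHom_augmentation_comp _ hv⟩

/-- A dominant morphism from a torus bundle to a variety that is not `𝔸¹⁎`-uniruled factors through
the base. -/
theorem IsLocTrivTorusBundle.exists_comp_eq_of_not_isA1StarUniruled {n : ℕ} {X Y Q : Scheme}
    {sX : X ⟶ SpecC} {sY : Y ⟶ SpecC} {q : Q ⟶ Y} (hq : IsLocTrivTorusBundle n sY q)
    (hX : IsVarietyOver sX) (hY : IsVarietyOver sY) (hnur : ¬ IsA1StarUniruled sX) (H : Q ⟶ X)
    [IsDominant H] [LocallyOfFiniteType H] : ∃ ψ : Y ⟶ X, q ≫ ψ = H := by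
  refine IsTorusChart.exists_comp_eq (n := n) H fun y ↦ ?_
  obtain ⟨B, _, _, _, u, v, _, h, hy, -⟩ := hq.exists_isTorusChart hY ⊤ y trivial
  refine ⟨B, _, u, v, h, hy, fun i ↦ ?_⟩
  have := h.isOpenImmersion_total
  have := hq.isDominant_of_isTorusChart hY h
  have h₁ : Algebra.FiniteType B (AddMonoidAlgebra B (Fin n → ℤ)) := inferInstance
  have : Algebra.FiniteType ℂ (AddMonoidAlgebra B (Fin n → ℤ)) := .trans ‹_› h₁
  exact specHom_comp_eq_of_not_isA1StarUniruled hX hnur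
    (FractionRing (AddMonoidAlgebra B (Fin n → ℤ))) _
    (AddMonoidAlgebra.coaction_finiteType _) (AddMonoidAlgebra.eval₂_comp_coaction _) (v ≫ H)

theorem RatFunc.exists_eq_C_of_isAlgebraic {A B N : Type} [CommRing A] [CommRing B]
    [Algebra A B] [Algebra.IsAlgebraic A B] [Field N] (ν : B →+* RatFunc N) (ι : A →+* N)
    (hι : Function.Injective ι) (h : ν.comp (algebraMap A B) = RatFunc.C.comp ι) (b : B) :
    ∃ c, ν b = RatFunc.C c := by
  by_contra hb
  obtain ⟨f, hf, hfb⟩ := Algebra.IsAlgebraic.isAlgebraic (R := A) b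
  refine RatFunc.transcendental_of_ne_C _ hb ⟨f.map ι, (Polynomial.map_ne_zero_iff hι).mpr hf, ?_⟩
  rw [Polynomial.aeval_def, Polynomial.eval₂_map, RatFunc.algebraMap_eq_C, ← h,
    ← Polynomial.hom_eval₂, ← Polynomial.aeval_def, hfb, map_zero]

/-- The invariance of `v ≫ F ≫ q` under the torus, for a chart `v` of `p` and an isomorphism `F`
over a morphism of the bases in the opposite direction. -/
theorem IsTorusChart.specHom_coaction_comp {n : ℕ} {X Y P Q : Scheme} {sX : X ⟶ SpecC}
    {sY : Y ⟶ SpecC} {p : P ⟶ X} {q : Q ⟶ Y} (hp : IsLocTrivTorusBundle n sX p)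
    (hq : IsLocTrivTorusBundle n sY q) (hX : IsVarietyOver sX) (hY : IsVarietyOver sY)
    (Φ : P ≅ Q) (ψ : Y ⟶ X) (hψ : q ≫ ψ = Φ.inv ≫ p) {A : Type} [CommRing A] [IsDomain A]
    (N : Type) [Field N] [Algebra (AddMonoidAlgebra A (Fin n → ℤ)) N]
    [IsFractionRing (AddMonoidAlgebra A (Fin n → ℤ)) N] {u : Spec (.of A) ⟶ X}
    {v : Spec (.of (AddMonoidAlgebra A (Fin n → ℤ))) ⟶ P} (h : IsTorusChart n p u v)
    (χ : (Fin n → ℤ) →+ ℤ) :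
    specHom (AddMonoidAlgebra.coaction A χ).toRingHom ≫ v ≫ Φ.hom ≫ q =
      specHom LaurentPolynomial.C ≫ v ≫ Φ.hom ≫ q := by
  have := hX.1
  have := hY.1
  have := hY.2.1
  have := Scheme.isSeparated_of_spec sY
  have := h.isOpenImmersion
  have hinj := IsFractionRing.injective (AddMonoidAlgebra A (Fin n → ℤ)) N
  have := hp.isDominant_of_isTorusChart hX h
  have := isDominant_specHom hinj
  let x : Spec (.of N) := (⊥ : PrimeSpectrum N)
  set g := specHom (algebraMap (AddMonoidAlgebra A (Fin n → ℤ)) N) ≫ v ≫ Φ.hom with hg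
  have hgq : g ≫ q ≫ ψ = specHom ((algebraMap _ N).comp
      (algebraMap A (AddMonoidAlgebra A (Fin n → ℤ)))) ≫ u := by
    rw [hψ, hg, Category.assoc, Category.assoc, Iso.hom_inv_id_assoc, h.isPullback.w,
      specHom_comp (algebraMap A _) (algebraMap _ N), Category.assoc]
  have hx : (g ≫ q) x ∈ ψ ⁻¹ᵁ u.opensRange := by
    show ψ ((g ≫ q) x) ∈ Set.range u
    rw [← Scheme.Hom.comp_apply, Category.assoc, hgq]
    simp
  obtain ⟨B, _, _, _, u', v', -, h', hx', hr⟩ := hq.exists_isTorusChart hY _ _ hx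
  have := h'.isOpenImmersion
  have := h'.isOpenImmersion_total
  obtain ⟨κ, hκ⟩ := exists_specHom_comp_eq_of_field v' g x (h'.range_total ▸ hx')
  have hκinj : Function.Injective κ := by
    have : IsDominant (specHom κ ≫ v') := hκ ▸ inferInstance
    exact injective_of_isDominant_specHom (.of_comp_of_isOpenImmersion _ v')
  obtain ⟨α, hα⟩ := exists_specHom_comp_eq u (u' ≫ ψ) (by
    rintro _ ⟨z, rfl⟩
    exact hr ⟨z, rfl⟩)
  have hA : (κ.comp (algebraMap B _)).comp α = (algebraMap _ N).comp
      (algebraMap A (AddMonoidAlgebra A (Fin n → ℤ))) := by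
    apply specHom_injective
    rw [← cancel_mono u, ← hgq, hκ, specHom_comp, specHom_comp, Category.assoc, Category.assoc,
      ← hα, Category.assoc, h'.isPullback.w_assoc]
  algebraize [α]
  have := isAlgebraic_of_addMonoidAlgebra_injective κ hκinj hA
  have hm := AddMonoidAlgebra.eval₂_comp_coaction (B := A) χ
  obtain ⟨μ, hμ⟩ := LaurentPolynomial.exists_ringHom_comp_eq N _ hm
  refine specHom_comp_eq_of_const _ hm μ hμ _ u' (κ.comp (algebraMap B _)) ?_ ?_
  · rw [specHom_comp, Category.assoc, ← h'.isPullback.w, ← Category.assoc (specHom κ), ← hκ, hg,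
      Category.assoc, Category.assoc]
  · refine RatFunc.exists_eq_C_of_isAlgebraic (A := A) (μ.comp (κ.comp (algebraMap B _)))
      ((algebraMap _ N).comp (algebraMap A (AddMonoidAlgebra A (Fin n → ℤ)))) ?_ ?_
    · exact hinj.comp (FaithfulSMul.algebraMap_injective A _)
    · rw [RingHom.comp_assoc, RingHom.algebraMap_toAlgebra, hA, ← RingHom.comp_assoc, hμ]
      ext a
      simp only [RingHom.comp_apply]
      rw [← LaurentPolynomial.toRatFunc_C]
      exact congr_arg _ ((AddMonoidAlgebra.coaction A χ).commutes a)

/-- An isomorphism of torus bundles over varieties induces an isomorphism of the bases if one of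
them is not `𝔸¹⁎`-uniruled. -/
theorem IsLocTrivTorusBundle.exists_iso_of_not_isA1StarUniruled {n : ℕ} {X Y P Q : Scheme}
    {sX : X ⟶ SpecC} {sY : Y ⟶ SpecC} {p : P ⟶ X} {q : Q ⟶ Y} (hp : IsLocTrivTorusBundle n sX p)
    (hq : IsLocTrivTorusBundle n sY q) (hX : IsVarietyOver sX) (hY : IsVarietyOver sY)
    (hnur : ¬ IsA1StarUniruled sX) (Φ : P ≅ Q) : ∃ φ : X ≅ Y, Φ.hom ≫ q = p ≫ φ.hom := by
  have := hp.surjective hX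
  have := hp.locallyOfFiniteType hX
  have := hp.epi hX
  have := hq.epi hY
  obtain ⟨ψ, hψ⟩ := hq.exists_comp_eq_of_not_isA1StarUniruled hX hY hnur (Φ.inv ≫ p)
  obtain ⟨φ, hφ⟩ : ∃ φ : X ⟶ Y, p ≫ φ = Φ.hom ≫ q := by
    refine IsTorusChart.exists_comp_eq (n := n) _ fun x ↦ ?_
    obtain ⟨A, _, _, _, u, v, -, h, hx, -⟩ := hp.exists_isTorusChart hX ⊤ x trivial
    exact ⟨A, _, u, v, h, hx, fun i ↦ IsTorusChart.specHom_coaction_comp hp hq hX hY Φ ψ hψ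
      (FractionRing (AddMonoidAlgebra A (Fin n → ℤ))) h _⟩
  refine ⟨⟨φ, ψ, ?_, ?_⟩, hφ.symm⟩
  · rw [← cancel_epi p, reassoc_of% hφ, hψ, Iso.hom_inv_id_assoc, Category.comp_id]
  · rw [← cancel_epi q, reassoc_of% hψ, hφ, Iso.inv_hom_id_assoc, Category.comp_id]

theorem isLocTrivTorusBundle_fst (n : ℕ) {X : Scheme} (sX : X ⟶ SpecC) :
    IsLocTrivTorusBundle n sX (pullback.fst sX (Torus.str n)) := by
  refine fun x ↦ ⟨⊤, trivial, ?_⟩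
  have h : IsPullback (pullback.snd (pullback.fst sX (Torus.str n)) (⊤ : X.Opens).ι)
      (pullback.fst _ _ ≫ pullback.snd _ _) ((⊤ : X.Opens).ι ≫ sX) (Torus.str n) :=
    ((IsPullback.of_hasPullback _ _).paste_horiz (IsPullback.of_hasPullback sX _).flip).flip
  exact ⟨h.isoPullback, h.isoPullback_hom_fst⟩

end

/-- Strong cancellation for Zariski locally trivial `𝐓ⁿ`-bundles over non `𝔸¹⁎`-uniruled
varieties: if `X` or `Y` is a smooth variety which is not `𝔸¹⁎`-uniruled, then every
isomorphism of abstract varieties `Φ : P ≅ Q` between total spaces of Zariski locally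
trivial `𝐓ⁿ`-bundles `p : P → X`, `q : Q → Y` descends to an isomorphism `φ : X ≅ Y`
with `q ∘ Φ = φ ∘ p`.  In particular, strong cancellation holds for the products
`X × 𝐓ⁿ` and `Y × 𝐓ⁿ` of algebraic tori with non `𝔸¹⁎`-uniruled smooth varieties. -/
theorem bundle_cancellation_not_uniruled (n : ℕ)
    {X Y : Scheme} (sX : X ⟶ SpecC) (sY : Y ⟶ SpecC)
    (hX : IsVarietyOver sX) (hY : IsVarietyOver sY)
    (hXsm : IsSmooth sX) (hYsm : IsSmooth sY)
    (hnur : ¬ IsA1StarUniruled sX ∨ ¬ IsA1StarUniruled sY) :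
    (∀ (P Q : Scheme) (p : P ⟶ X) (q : Q ⟶ Y),
      IsLocTrivTorusBundle n sX p → IsLocTrivTorusBundle n sY q →
      ∀ Φ : P ≅ Q, ∃ φ : X ≅ Y, Φ.hom ≫ q = p ≫ φ.hom) ∧
    (∀ Φ : prodC sX (Torus.str n) ≅ prodC sY (Torus.str n),
      ∃ φ : X ≅ Y,
        Φ.hom ≫ pullback.fst sY (Torus.str n) =
          pullback.fst sX (Torus.str n) ≫ φ.hom) := by
  have key (P Q : Scheme) (p : P ⟶ X) (q : Q ⟶ Y) (hp : IsLocTrivTorusBundle n sX p)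
      (hq : IsLocTrivTorusBundle n sY q) (Φ : P ≅ Q) : ∃ φ : X ≅ Y, Φ.hom ≫ q = p ≫ φ.hom := by
    obtain hnur | hnur := hnur
    · exact hp.exists_iso_of_not_isA1StarUniruled hq hX hY hnur Φ
    · obtain ⟨φ, hφ⟩ := hq.exists_iso_of_not_isA1StarUniruled hp hY hX hnur Φ.symm
      refine ⟨φ.symm, ?_⟩
      rw [Iso.symm_hom, Iso.eq_comp_inv, Category.assoc, ← hφ, Iso.symm_hom, Iso.hom_inv_id_assoc]
  exact ⟨key, fun Φ ↦ key _ _ _ _ (isLocTrivTorusBundle_fst n sX) (isLocTrivTorusBundle_fst n sY) Φ⟩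

end
end

section
/- Let X be a complex affine variety such that X × 𝐓ⁿ is isomorphic to 𝐓^{n+m} for some n ≥ 1, m ≥ 0. Then X is isomorphic to the torus 𝐓^m. -/
open AlgebraicGeometry CategoryTheory CategoryTheory.Limits TopologicalSpace

noncomputable section

namespace AddMonoidAlgebra

/-- The units of a group algebra over a domain are monomials if the group has two unique sums. -/
theorem exists_eq_single_of_isUnit {R G : Type*} [CommRing R] [IsDomain R] [AddCommGroup G]
    [TwoUniqueSums G] {f : AddMonoidAlgebra R G} (hf : IsUnit f) :
    ∃ a r, IsUnit r ∧ f = single a r := by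
  classical
  obtain ⟨g, hfg⟩ := hf.exists_right_inv
  have hf0 : f.coeff.support.Nonempty := by
    rw [Finsupp.support_nonempty_iff, ne_eq, coeff_eq_zero]
    rintro rfl
    simp at hfg
  have hg0 : g.coeff.support.Nonempty := by
    rw [Finsupp.support_nonempty_iff, ne_eq, coeff_eq_zero]
    rintro rfl
    simp at hfg
  have add_eq_zero_of_unique {p : G × G} (hp : p ∈ f.coeff.support ×ˢ g.coeff.support)
      (hu : UniqueAdd f.coeff.support g.coeff.support p.1 p.2) : p.1 + p.2 = 0 := by
    by_contra hne
    have hcoeff := coeff_mul_add_of_uniqueAdd hu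
    rw [Finset.mem_product, Finsupp.mem_support_iff, Finsupp.mem_support_iff] at hp
    rw [hfg, one_def, coeff_single, Finsupp.single_eq_of_ne hne] at hcoeff
    exact mul_ne_zero hp.1 hp.2 hcoeff.symm
  have hcard : f.coeff.support.card * g.coeff.support.card ≤ 1 := by
    by_contra! hlt
    obtain ⟨p, hp, q, hq, hpq, hup, huq⟩ := TwoUniqueSums.uniqueAdd_of_one_lt_card hlt
    have hq' := Finset.mem_product.mp hq
    have := hup hq'.1 hq'.2 ((add_eq_zero_of_unique hq huq).trans (add_eq_zero_of_unique hp hup).symm)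
    exact hpq (Prod.ext this.1.symm this.2.symm)
  have hF := hf0.card_pos
  have hG := hg0.card_pos
  obtain ⟨a, r, -, ha⟩ := Finsupp.card_support_eq_one'.mp
    (show f.coeff.support.card = 1 by nlinarith)
  obtain ⟨b, s, -, hb⟩ := Finsupp.card_support_eq_one'.mp
    (show g.coeff.support.card = 1 by nlinarith)
  obtain rfl : f = single a r := coeff_injective ha
  obtain rfl : g = single b s := coeff_injective hb
  refine ⟨a, r, ?_, rfl⟩
  rw [single_mul_single, one_def, single_inj] at hfg
  obtain ⟨-, h⟩ | ⟨-, h⟩ := hfg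
  · exact IsUnit.of_mul_eq_one _ h
  · exact absurd h one_ne_zero

variable {R k G H : Type*} [CommRing R] [IsDomain R] [Field k] [AddCommGroup G]
  [TwoUniqueSums G] [AddCommGroup H]

/-- A ring homomorphism between group algebras maps constants from a field to constants. -/
theorem exists_map_single_zero_eq (ψ : AddMonoidAlgebra k H →+* AddMonoidAlgebra R G) (c : k) :
    ∃ r, ψ (single 0 c) = single 0 r := by
  have isUnit_map {x : k} (hx : x ≠ 0) : IsUnit (ψ (single 0 x)) :=
    (hx.isUnit.map (singleZeroRingHom (R := k) (M := H))).map ψ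
  by_cases hc : c = 0
  · exact ⟨0, by simp [hc]⟩
  by_cases hc1 : c + 1 = 0
  · obtain rfl : c = -1 := eq_neg_of_add_eq_zero_left hc1
    refine ⟨-1, ?_⟩
    rw [single_neg, ← one_def, map_neg, map_one, single_neg, ← one_def]
  obtain ⟨a, r, hr, har⟩ := exists_eq_single_of_isUnit (isUnit_map hc)
  obtain ⟨b, s, -, hbs⟩ := exists_eq_single_of_isUnit (isUnit_map hc1)
  rw [single_add, map_add, har, ← one_def, map_one, one_def] at hbs
  by_cases ha : a = 0
  · exact ⟨r, by rw [har, ha]⟩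
  have h0 := congr_arg (fun f ↦ f.coeff 0) hbs
  have h1 := congr_arg (fun f ↦ f.coeff a) hbs
  have hr0 := hr.ne_zero
  classical
  simp only [coeff_add, coeff_single, Finsupp.add_apply, Finsupp.single_apply] at h0 h1
  by_cases hb : b = 0 <;> simp_all [eq_comm]

/-- If `R[G] ≅ k[H]` as rings, with `R` a domain and `k` a field, then `R` is isomorphic to the
group algebra over `k` of the kernel of a surjective homomorphism `H → G`. -/
theorem exists_surjective_ringEquiv_ker [TwoUniqueSums H]
    (φ : AddMonoidAlgebra R G ≃+* AddMonoidAlgebra k H) :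
    ∃ δ : H →+ G, Function.Surjective δ ∧ Nonempty (R ≃+* AddMonoidAlgebra k δ.ker) := by
  classical
  let ψ : AddMonoidAlgebra k H →+* AddMonoidAlgebra R G := φ.symm
  have isUnit_single (b : H) : IsUnit (single b (1 : k)) :=
    (Group.isUnit (Multiplicative.ofAdd b)).map (of k H)
  have isUnit_single' (a : G) : IsUnit (single a (1 : R)) :=
    (Group.isUnit (Multiplicative.ofAdd a)).map (of R G)
  choose d ρ hρ hd using fun b ↦ exists_eq_single_of_isUnit ((isUnit_single b).map ψ)
  have map_single (b : H) (c : k) : ∃ r, ψ (single b c) = single (d b) r := by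
    obtain ⟨r, hr⟩ := exists_map_single_zero_eq ψ c
    refine ⟨r * ρ b, ?_⟩
    rw [← zero_add b, ← mul_one c, ← single_mul_single, map_mul, hr, hd, single_mul_single,
      zero_add, zero_add]
  let δ : H →+ G := AddMonoidHom.mk' d fun b b' ↦ by
    have h := hd (b + b')
    rw [← one_mul (1 : k), ← single_mul_single, map_mul, hd, hd, single_mul_single] at h
    exact ((single_inj.mp h).resolve_right fun h ↦ (hρ (b + b')).ne_zero h.2).1.symm
  have δ_apply (b : H) : δ b = d b := rfl
  let θ : AddMonoidAlgebra k δ.ker →+* R :=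
    ((lift R R G 1 : AddMonoidAlgebra R G →ₐ[R] R) : AddMonoidAlgebra R G →+* R).comp
      (ψ.comp (mapDomainRingHom k δ.ker.subtype))
  have θ_single (b : δ.ker) (c : k) : single 0 (θ (single b c)) = ψ (single (b : H) c) := by
    obtain ⟨r, hr⟩ := map_single b c
    have hb : d b = 0 := b.2
    simp [θ, hr, hb]
  have θ_apply (f : AddMonoidAlgebra k δ.ker) :
      single 0 (θ f) = ψ (mapDomainRingHom k δ.ker.subtype f) := by
    induction f using induction_linear with
    | zero => simp
    | add f g hf hg => rw [map_add, single_add, hf, hg, map_add, map_add]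
    | single b c => simp [θ_single]
  have coeff_zero_mem (f : AddMonoidAlgebra k H) : (ψ f).coeff 0 ∈ θ.range := by
    induction f using induction_linear with
    | zero => simp
    | add f g hf hg =>
      rw [map_add, coeff_add]
      exact add_mem hf hg
    | single b c =>
      by_cases hb : d b = 0
      · refine ⟨single ⟨b, hb⟩ c, ?_⟩
        rw [← θ_single ⟨b, hb⟩ c]
        simp
      · obtain ⟨r, hr⟩ := map_single b c
        rw [hr, coeff_single, Finsupp.single_eq_of_ne (Ne.symm hb)]
        exact zero_mem _
  refine ⟨δ, fun a ↦ ?_, ⟨(RingEquiv.ofBijective θ ⟨fun f g hfg ↦ ?_, fun r ↦ ?_⟩).symm⟩⟩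
  · obtain ⟨b, s, hs, hbs⟩ := exists_eq_single_of_isUnit ((isUnit_single' a).map φ)
    obtain ⟨r, hr⟩ := map_single b s
    have : single a (1 : R) = single (d b) r := by
      rw [← hr, ← hbs]
      exact (φ.symm_apply_apply _).symm
    exact ⟨b, ((single_inj.mp this).resolve_right fun h ↦ one_ne_zero h.1).1.symm⟩
  · have h : ψ (mapDomainRingHom k δ.ker.subtype f) = ψ (mapDomainRingHom k δ.ker.subtype g) := by
      rw [← θ_apply, ← θ_apply, hfg]
    exact mapDomain_injective δ.ker.subtype_injective (φ.symm.injective h)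
  · have h := coeff_zero_mem (φ (single 0 r))
    have hr : ψ (φ (single 0 r)) = single 0 r := φ.symm_apply_apply _
    rw [hr] at h
    simpa using h

end AddMonoidAlgebra

/-- The kernel of a surjection of lattices `ℤⁿ⁺ᵐ → ℤⁿ` is isomorphic to `ℤᵐ`. -/
theorem nonempty_addEquiv_ker_of_surjective {n m : ℕ} (δ : (Fin (n + m) → ℤ) →+ (Fin n → ℤ))
    (hδ : Function.Surjective δ) : Nonempty (δ.ker ≃+ (Fin m → ℤ)) := by
  let l := δ.toIntLinearMap
  have hrank := (LinearMap.ker l).finrank_quotient_add_finrank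
  rw [(l.quotKerEquivOfSurjective hδ).finrank_eq, Module.finrank_fin_fun,
    Module.finrank_fin_fun] at hrank
  have e : LinearMap.ker l ≃ₗ[ℤ] (Fin m → ℤ) :=
    LinearEquiv.ofFinrankEq _ _ (by rw [Module.finrank_fin_fun]; omega)
  exact ⟨e.toAddEquiv⟩

/-- If `X` is a complex affine variety such that `X × 𝐓ⁿ ≅ 𝐓^{n+m}` for some `n ≥ 1`,
`m ≥ 0`, then `X ≅ 𝐓^m`. -/
theorem torus_cancellation {X : Scheme} (sX : X ⟶ SpecC)
    (hX : IsVarietyOver sX) (hXaff : IsAffine X)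
    (n m : ℕ) (hn : 1 ≤ n)
    (h : Nonempty (prodC sX (Torus.str n) ≅ Torus (n + m))) :
    Nonempty (X ≅ Torus m) := by
  let Y := X.isoSpec
  let R := Γ(X, ⊤)
  have := hX.1
  obtain ⟨f, hf⟩ := Spec.map_surjective (Y.inv ≫ sX)
  algebraize [f.hom]
  let e₁ : pullback (Spec.map f) (Torus.str n) ≅ prodC sX (Torus.str n) :=
    asIso (pullback.map _ _ _ _ Y.inv (𝟙 _) (𝟙 _) (by simp [hf]) (by simp))
  let e₂ := pullbackSpecIso ℂ R (LaurentRing n)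
  obtain ⟨e₃⟩ := h
  let e : Spec (.of (TensorProduct ℂ R (LaurentRing n))) ≅ Torus (n + m) := e₂.symm ≪≫ e₁ ≪≫ e₃
  let φ : LaurentRing (n + m) ≃+* TensorProduct ℂ R (LaurentRing n) :=
    (Scheme.Spec.preimageIso e).unop.commRingCatIsoToRingEquiv
  obtain ⟨δ, hδ, ⟨ε⟩⟩ := AddMonoidAlgebra.exists_surjective_ringEquiv_ker
    ((AddMonoidAlgebra.scalarTensorEquiv ℂ R (M := Fin n → ℤ)).symm.toRingEquiv.trans φ.symm)
  obtain ⟨κ⟩ := nonempty_addEquiv_ker_of_surjective δ hδ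
  let ε' : R ≃+* LaurentRing m := ε.trans (AddMonoidAlgebra.domCongr ℂ ℂ κ).toRingEquiv
  exact ⟨Y ≪≫ Scheme.Spec.mapIso ε'.toCommRingCatIso.symm.op⟩

end
end

section
/- Let C be an irreducible smooth complex curve and let p : P → C be a Zariski locally trivial 𝐓ⁿ-bundle. Then the total space P is an affine variety if and only if C is an affine curve. -/
open AlgebraicGeometry CategoryTheory CategoryTheory.Limits TopologicalSpace

noncomputable section

open AddMonoidAlgebra in
/-- Units of a group algebra over a domain are monomials if the exponents have unique sums. -/
lemma AddMonoidAlgebra.exists_eq_single_of_isUnit_s6 {R A : Type*} [CommRing R] [IsDomain R]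
    [AddCommGroup A] [TwoUniqueSums A] {x : AddMonoidAlgebra R A} (hx : IsUnit x) :
    ∃ m r, x = single m r := by
  classical
  obtain ⟨y, hxy⟩ := hx.exists_right_inv
  have hx0 : x.coeff.support.card ≠ 0 := by
    intro h
    have : x = 0 := by simpa using h
    simp [this] at hxy
  have hy0 : y.coeff.support.card ≠ 0 := by
    intro h
    have : y = 0 := by simpa using h
    simp [this] at hxy
  have hle : x.coeff.support.card * y.coeff.support.card ≤ 1 := by
    by_contra! h
    obtain ⟨p, hp, q, hq, hne, hup, huq⟩ := TwoUniqueSums.uniqueAdd_of_one_lt_card h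
    rw [Finset.mem_product] at hp hq
    have key : ∀ a b, a ∈ x.coeff.support → b ∈ y.coeff.support →
        UniqueAdd x.coeff.support y.coeff.support a b → a + b = 0 := by
      intro a b ha hb hu
      by_contra hab
      have h1 := coeff_mul_add_of_uniqueAdd hu
      rw [hxy, one_def, coeff_single, Finsupp.single_eq_of_ne hab] at h1
      exact mul_ne_zero (Finsupp.mem_support_iff.mp ha) (Finsupp.mem_support_iff.mp hb) h1.symm
    have hpq := hup hq.1 hq.2 ((key _ _ hq.1 hq.2 huq).trans (key _ _ hp.1 hp.2 hup).symm)
    exact hne (Prod.ext hpq.1.symm hpq.2.symm)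
  have hcard : x.coeff.support.card = 1 := by
    nlinarith [Nat.pos_of_ne_zero hx0, Nat.pos_of_ne_zero hy0]
  obtain ⟨m, r, -, h⟩ := Finsupp.card_support_eq_one'.mp hcard
  exact ⟨m, r, by ext : 1; simpa using h⟩

/-- `φ : R →+* B` exhibits `B` as a Laurent polynomial ring in `n` variables over `R`. -/
def IsLaurentExtension (n : ℕ) {R B : Type*} [CommRing R] [CommRing B] (φ : R →+* B) : Prop :=
  ∃ e : B ≃+* AddMonoidAlgebra R (Fin n → ℤ), ∀ r, e (φ r) = AddMonoidAlgebra.single 0 r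

namespace IsLaurentExtension

variable {n : ℕ} {R B R' B' : Type*} [CommRing R] [CommRing B] [CommRing R'] [CommRing B']
  {φ : R →+* B} {φ' : R' →+* B'}

/-- The constant coefficient of an element of a Laurent polynomial ring over `R`. -/
def constCoeff (h : IsLaurentExtension n φ) : B →+ R :=
  (((Finsupp.applyAddHom (0 : Fin n → ℤ)).comp
    AddMonoidAlgebra.coeffAddEquiv.toAddMonoidHom)).comp h.choose.toAddEquiv.toAddMonoidHom

lemma constCoeff_apply (h : IsLaurentExtension n φ) (b : B) :
    h.constCoeff b = (h.choose b).coeff 0 := rfl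

lemma constCoeff_one (h : IsLaurentExtension n φ) : h.constCoeff 1 = 1 := by
  simp [constCoeff_apply, AddMonoidAlgebra.one_def]

lemma injective (h : IsLaurentExtension n φ) : Function.Injective φ := by
  intro a b hab
  have := congrArg h.choose hab
  rw [h.choose_spec, h.choose_spec] at this
  simpa using congrArg (fun x ↦ x.coeff 0) this

lemma isDomain [IsDomain R] (h : IsLaurentExtension n φ) : IsDomain B :=
  have : IsDomain (AddMonoidAlgebra R (Fin n → ℤ)) := NoZeroDivisors.to_isDomain _
  h.choose.toMulEquiv.isDomain

lemma of_ringEquiv (h : IsLaurentExtension n φ) (a : R ≃+* R') (b : B ≃+* B')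
    (hab : ∀ r, b (φ r) = φ' (a r)) : IsLaurentExtension n φ' := by
  obtain ⟨e, he⟩ := h
  refine ⟨(b.symm.trans e).trans (AddMonoidAlgebra.mapRingEquiv _ a), fun r ↦ ?_⟩
  obtain ⟨r, rfl⟩ := a.surjective r
  simp [← hab, he]

/-- Constant coefficients are compatible with localization. -/
lemma constCoeff_map [IsDomain R] [IsDomain R'] (h : IsLaurentExtension n φ)
    (h' : IsLaurentExtension n φ') (θ : R →+* R') (ρ : B →+* B')
    (hcomm : ∀ r, ρ (φ r) = φ' (θ r)) (hρ : Function.Injective ρ)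
    (hθ : ∀ v : R', ∃ s r : R, s ≠ 0 ∧ v * θ s = θ r) (b : B) :
    h'.constCoeff (ρ b) = θ (h.constCoeff b) := by
  obtain ⟨x, rfl⟩ := h.choose.symm.surjective b
  induction x using AddMonoidAlgebra.induction_linear with
  | zero => simp
  | add x y hx hy => simp only [map_add, hx, hy]
  | single m r =>
    have hφ : ∀ r, h.choose.symm (.single 0 r) = φ r := fun r ↦ by
      rw [← h.choose_spec, RingEquiv.symm_apply_apply]
    by_cases hm : m = 0
    · subst hm
      rw [hφ, hcomm, constCoeff_apply, constCoeff_apply, h'.choose_spec, h.choose_spec]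
      simp
    · have hsplit : (AddMonoidAlgebra.single m r : AddMonoidAlgebra R (Fin n → ℤ)) =
          .single 0 r * .single m 1 := by simp
      have hunit : IsUnit (AddMonoidAlgebra.single m 1 : AddMonoidAlgebra R (Fin n → ℤ)) :=
        .of_mul_eq_one (.single (-m) 1) (by simp [AddMonoidAlgebra.one_def])
      obtain ⟨k, v, hkv⟩ := AddMonoidAlgebra.exists_eq_single_of_isUnit_s6
        (((hunit.map h.choose.symm).map ρ).map h'.choose)
      have hk : k ≠ 0 := by
        rintro rfl
        rw [← h'.choose_spec] at hkv
        replace hkv := h'.choose.injective hkv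
        obtain ⟨s, t, hs, hst⟩ := hθ v
        have h1 : ρ (h.choose.symm (.single m 1) * φ s) = ρ (φ t) := by
          rw [map_mul, hkv, hcomm, hcomm, ← map_mul, hst]
        have h2 := congrArg h.choose (hρ h1)
        rw [map_mul, RingEquiv.apply_symm_apply, h.choose_spec, h.choose_spec] at h2
        simp only [AddMonoidAlgebra.single_mul_single, add_zero, one_mul] at h2
        have h3 := congrArg (fun x ↦ x.coeff m) h2
        simp [Ne.symm hm, hs] at h3
      rw [constCoeff_apply, constCoeff_apply, RingEquiv.apply_symm_apply, hsplit, map_mul, map_mul,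
        hφ, hcomm, map_mul, h'.choose_spec, hkv]
      simp [hk.symm, Ne.symm hm]

/-- A prime avoiding the constant coefficient of `b` lifts to a prime avoiding `b`. -/
lemma exists_comap_eq (h : IsLaurentExtension n φ) (b : B) (q : PrimeSpectrum R)
    (hq : h.constCoeff b ∉ q.asIdeal) :
    ∃ Q : PrimeSpectrum B, Q.comap φ = q ∧ b ∉ Q.asIdeal := by
  let ψ : B →+* AddMonoidAlgebra (R ⧸ q.asIdeal) (Fin n → ℤ) :=
    (AddMonoidAlgebra.mapRingHom _ (Ideal.Quotient.mk q.asIdeal)).comp h.choose.toRingHom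
  have : IsDomain (AddMonoidAlgebra (R ⧸ q.asIdeal) (Fin n → ℤ)) := NoZeroDivisors.to_isDomain _
  refine ⟨⟨RingHom.ker ψ, RingHom.ker_isPrime ψ⟩, ?_, ?_⟩
  · ext r
    simp [ψ, RingHom.mem_ker, h.choose_spec, Ideal.Quotient.eq_zero_iff_mem]
  · intro hb
    have := congrArg (fun x ↦ x.coeff 0) (RingHom.mem_ker.mp hb)
    simp [ψ] at this
    exact hq (Ideal.Quotient.eq_zero_iff_mem.mp this)

end IsLaurentExtension

section Bundle

variable {n : ℕ} {C P : Scheme} {sC : C ⟶ SpecC} {p : P ⟶ C}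

/-- A morphism of affine schemes which is a base change of `Torus.str n` is given on global
sections by a Laurent polynomial ring. -/
lemma IsLaurentExtension.of_isPullback {X Y : Scheme} [IsAffine Y] {f : X ⟶ Y} {t : X ⟶ Torus n}
    {s : Y ⟶ SpecC} (h : IsPullback t f (Torus.str n) s) :
    IsLaurentExtension n f.appTop.hom := by
  let R := Γ(Y, ⊤)
  let g : CommRingCat.of ℂ ⟶ R := (Scheme.ΓSpecIso _).inv ≫ s.appTop
  algebraize [g.hom]
  have h1 : IsPushout (CommRingCat.ofHom (algebraMap ℂ (LaurentRing n))) g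
      ((Scheme.ΓSpecIso _).inv ≫ t.appTop) f.appTop :=
    (isPushout_appTop_of_isPullback h).of_iso (Scheme.ΓSpecIso _) (Scheme.ΓSpecIso _)
      (Iso.refl _) (Iso.refl _) (by simp) (by simp [g]) (by simp) (by simp)
  have h2 := (CommRingCat.isPushout_tensorProduct ℂ R (LaurentRing n)).flip
  let e₁ := h1.isoIsPushout _ _ h2
  let e := e₁.commRingCatIsoToRingEquiv.trans
    (AddMonoidAlgebra.scalarTensorEquiv (M := Fin n → ℤ) ℂ R).toRingEquiv
  refine ⟨e, fun r ↦ ?_⟩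
  have h3 : e₁.hom (f.appTop r) = r ⊗ₜ[ℂ] 1 :=
    congr($(h1.inr_isoIsPushout_hom _ _ h2) r)
  change AddMonoidAlgebra.scalarTensorEquiv ℂ R (e₁.hom (f.appTop r)) = _
  rw [h3]
  simp [AddMonoidAlgebra.one_def]

/-- A trivialization of a torus bundle over `U` restricts to any open subset of `U`. -/
lemma IsTrivialTorusBundle.exists_isPullback {U W : C.Opens}
    (hU : IsTrivialTorusBundle n (U.ι ≫ sC) (pullback.snd p U.ι)) (hWU : W ≤ U) :
    ∃ t : (p ⁻¹ᵁ W).toScheme ⟶ Torus n, IsPullback t (p ∣_ W) (Torus.str n) (W.ι ≫ sC) := by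
  obtain ⟨e, he⟩ := hU
  have h1 : IsPullback (e.hom ≫ pullback.snd (U.ι ≫ sC) (Torus.str n)) (pullback.snd p U.ι)
      (Torus.str n) (U.ι ≫ sC) :=
    (IsPullback.of_hasPullback (U.ι ≫ sC) (Torus.str n)).flip.of_iso e.symm (Iso.refl _)
      (Iso.refl _) (Iso.refl _) (by simp) (by simp [← he]) (by simp) (by simp)
  let l : (p ⁻¹ᵁ W).toScheme ⟶ pullback p U.ι :=
    pullback.lift (p ⁻¹ᵁ W).ι (p ∣_ W ≫ C.homOfLE hWU) (by simp)
  have hl₁ : l ≫ pullback.fst p U.ι = (p ⁻¹ᵁ W).ι := pullback.lift_fst _ _ _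
  have hl₂ : l ≫ pullback.snd p U.ι = p ∣_ W ≫ C.homOfLE hWU := pullback.lift_snd _ _ _
  have h2 : IsPullback l (p ∣_ W) (pullback.snd p U.ι) (C.homOfLE hWU) := by
    refine IsPullback.of_right ?_ hl₂ (IsPullback.of_hasPullback p U.ι)
    rw [hl₁, Scheme.homOfLE_ι]
    exact (isPullback_morphismRestrict p W).flip
  exact ⟨_, by simpa using h2.paste_horiz h1⟩

/-- Over an affine open subset of a trivializing open subset, the total space of a torus bundle is
the spectrum of a Laurent polynomial ring. -/
lemma IsTrivialTorusBundle.isLaurentExtension_app {U W : C.Opens}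
    (hU : IsTrivialTorusBundle n (U.ι ≫ sC) (pullback.snd p U.ι)) (hW : IsAffineOpen W)
    (hWU : W ≤ U) : IsLaurentExtension n (p.app W).hom := by
  have : IsAffine W := hW
  obtain ⟨t, ht⟩ := hU.exists_isPullback hWU
  refine (IsLaurentExtension.of_isPullback ht).of_ringEquiv
    W.topIso.commRingCatIsoToRingEquiv (p ⁻¹ᵁ W).topIso.commRingCatIsoToRingEquiv fun r ↦ ?_
  have : (p ∣_ W).appTop ≫ (p ⁻¹ᵁ W).topIso.hom = W.topIso.hom ≫ p.app W := by
    rw [morphismRestrict_appTop]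
    refine (Category.assoc _ _ _).trans (.trans ?_ (p.naturality _).symm)
    exact congr(p.app _ ≫ $((P.presheaf.map_comp _ _).symm))
  exact congr($this r)

lemma IsLocTrivTorusBundle.exists_isAffineOpen (hp : IsLocTrivTorusBundle n sC p) (x : C) :
    ∃ W U : C.Opens, x ∈ W ∧ IsAffineOpen W ∧ W ≤ U ∧
      IsTrivialTorusBundle n (U.ι ≫ sC) (pullback.snd p U.ι) := by
  obtain ⟨U, hxU, hU⟩ := hp x
  obtain ⟨_, ⟨W, hW, rfl⟩, hxW, hWU⟩ :=
    C.isBasis_affineOpens.exists_subset_of_mem_open hxU U.isOpen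
  exact ⟨W, U, hxW, hW, hWU, hU⟩

lemma IsLocTrivTorusBundle.isAffineHom (hp : IsLocTrivTorusBundle n sC p) : IsAffineHom p := by
  refine isAffineHom_of_forall_exists_isAffineOpen p fun x ↦ ?_
  obtain ⟨W, U, hxW, hW, hWU, hU⟩ := hp.exists_isAffineOpen x
  have : IsAffine W := hW
  obtain ⟨t, ht⟩ := hU.exists_isPullback hWU
  exact ⟨W, hxW, hW, .of_isPullback ht⟩

/-- Restricting to a basic open subset of an affine open subset commutes with taking constant
coefficients. -/
lemma IsLaurentExtension.constCoeff_presheaf_map [IsIntegral C] [IsAffineHom p] {V W : C.Opens}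
    (hV : IsAffineOpen V) (f : Γ(C, V)) (hf : W = C.basicOpen f) [Nonempty W] (i : W ⟶ V)
    (hφV : IsLaurentExtension n (p.app V).hom) (hφW : IsLaurentExtension n (p.app W).hom)
    (j : p ⁻¹ᵁ W ⟶ p ⁻¹ᵁ V) (b : Γ(P, p ⁻¹ᵁ V)) :
    hφW.constCoeff (P.presheaf.map j.op b) = C.presheaf.map i.op (hφV.constCoeff b) := by
  have : Nonempty V := .map (fun x ↦ ⟨x.1, i.le x.2⟩) ‹Nonempty W›
  let := (C.presheaf.map i.op).hom.toAlgebra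
  let := (P.presheaf.map j.op).hom.toAlgebra
  have hlC := hV.isLocalization_of_eq_basicOpen f i hf
  have hlP := (hV.preimage p).isLocalization_of_eq_basicOpen (p.app V f) j
    (by rw [hf, Scheme.preimage_basicOpen])
  have hf0 : f ≠ 0 := by
    rintro rfl
    obtain ⟨x⟩ := ‹Nonempty W›
    simpa [hf] using x.2
  refine hφV.constCoeff_map hφW (C.presheaf.map i.op).hom (P.presheaf.map j.op).hom ?_ ?_ ?_ b
  · intro r
    exact congr($(p.naturality i.op) r).symm
  · have : IsDomain Γ(P, p ⁻¹ᵁ V) := hφV.isDomain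
    refine IsLocalization.injective (M := Submonoid.powers (p.app V f)) _
      (powers_le_nonZeroDivisors_of_noZeroDivisors ?_)
    rw [Ne, map_eq_zero_iff _ hφV.injective]
    exact hf0
  · intro v
    obtain ⟨⟨r, _, k, rfl⟩, h⟩ := IsLocalization.surj (Submonoid.powers f) v
    exact ⟨f ^ k, r, pow_ne_zero _ hf0, h⟩

/-- The Reynolds operator of a torus bundle with affine total space takes constant coefficients in
local trivializations. -/
lemma IsLocTrivTorusBundle.exists_reynolds [IsIntegral C] (hp : IsLocTrivTorusBundle n sC p) :
    ∃ ρ : Γ(P, ⊤) →+ Γ(C, ⊤), ρ 1 = 1 ∧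
      ∀ g, (C.basicOpen (ρ g) : Set C) ⊆ p '' (P.basicOpen g : Set P) := by
  have := hp.isAffineHom
  choose W U hxW hW hWU hU using hp.exists_isAffineOpen
  have (x : C) : Nonempty (W x) := ⟨x, hxW x⟩
  have hL (x : C) := (hU x).isLaurentExtension_app (hW x) (hWU x)
  have hcover : (⊤ : C.Opens) ≤ iSup W := fun x _ ↦ Opens.mem_iSup.mpr ⟨x, hxW x⟩
  let c (g : Γ(P, ⊤)) (x : C) : Γ(C, W x) :=
    (hL x).constCoeff (P.presheaf.map (homOfLE le_top).op g)
  have hc (g : Γ(P, ⊤)) : TopCat.Presheaf.IsCompatible C.presheaf W (c g) := by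
    intro x y
    refine C.IsSheaf.section_ext fun z hz ↦ ?_
    obtain ⟨f, f', hff', hzf⟩ := exists_basicOpen_le_affine_inter (hW x) (hW y) z hz
    have hx : C.basicOpen f ≤ W x := C.basicOpen_le f
    have hy : C.basicOpen f ≤ W y := hff' ▸ C.basicOpen_le f'
    have : Nonempty (C.basicOpen f) := ⟨z, hzf⟩
    have hD := (hU x).isLaurentExtension_app ((hW x).basicOpen f) (hx.trans (hWU x))
    refine ⟨C.basicOpen f, le_inf hx hy, hzf, ?_⟩
    have h1 := (hL x).constCoeff_presheaf_map (hW x) f rfl (homOfLE hx) hD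
      (homOfLE (p.preimage_mono hx)) (P.presheaf.map (homOfLE le_top).op g)
    have h2 := (hL y).constCoeff_presheaf_map (hW y) f' hff' (homOfLE hy) hD
      (homOfLE (p.preimage_mono hy)) (P.presheaf.map (homOfLE le_top).op g)
    simp only [← ConcreteCategory.comp_apply, ← Functor.map_comp, ← op_comp] at h1 h2 ⊢
    exact h1.symm.trans h2
  have hglue (g : Γ(P, ⊤)) : ∃ s : Γ(C, ⊤),
      ∀ x, C.presheaf.map (homOfLE (le_top : W x ≤ ⊤)).op s = c g x :=
    (C.sheaf.existsUnique_gluing' W ⊤ (fun _ ↦ homOfLE le_top) hcover (c g) (hc g)).exists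
  choose ρ hρ using hglue
  have hext {s t : Γ(C, ⊤)} (h : ∀ x, C.presheaf.map (homOfLE (le_top : W x ≤ ⊤)).op s =
      C.presheaf.map (homOfLE le_top).op t) : s = t :=
    C.sheaf.eq_of_locally_eq' W ⊤ (fun _ ↦ homOfLE le_top) hcover s t h
  refine ⟨AddMonoidHom.mk' ρ fun a b ↦ hext fun x ↦ ?_, hext fun x ↦ ?_, fun g z hz ↦ ?_⟩
  · simp only [map_add, hρ, c]
  · change C.presheaf.map _ (ρ 1) = _
    simp only [hρ, c, map_one, IsLaurentExtension.constCoeff_one]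
  · have hz' : z ∈ C.basicOpen (c g z) := by
      rw [← hρ, Scheme.basicOpen_res]
      exact ⟨hxW z, hz⟩
    let q : Spec Γ(C, W z) := (hW z).primeIdealOf ⟨z, hxW z⟩
    have hqz : (hW z).fromSpec q = z := (hW z).fromSpec_primeIdealOf _
    have hq : c g z ∉ q.asIdeal := by
      have : q ∈ (hW z).fromSpec ⁻¹ᵁ C.basicOpen (c g z) := by
        change (hW z).fromSpec q ∈ C.basicOpen (c g z)
        rwa [hqz]
      rwa [(hW z).fromSpec_preimage_basicOpen] at this
    obtain ⟨Q, hQq, hQ⟩ := (hL z).exists_comap_eq _ q hq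
    refine ⟨((hW z).preimage p).fromSpec Q, ?_, ?_⟩
    · have : Q ∈ ((hW z).preimage p).fromSpec ⁻¹ᵁ
          P.basicOpen (P.presheaf.map (homOfLE (le_top : p ⁻¹ᵁ W z ≤ ⊤)).op g) := by
        rw [((hW z).preimage p).fromSpec_preimage_basicOpen]
        exact hQ
      rw [Scheme.basicOpen_res] at this
      exact this.2
    · have h := (hW z).SpecMap_appLE_fromSpec p ((hW z).preimage p) le_rfl
      rw [← Scheme.Hom.app_eq_appLE] at h
      let Q' : Spec Γ(P, p ⁻¹ᵁ W z) := Q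
      have h' := congr($h Q')
      simp only [Scheme.Hom.comp_apply] at h'
      exact h'.symm.trans ((congrArg (hW z).fromSpec hQq).trans hqz)

/-- The base of a torus bundle with affine total space is affine. -/
lemma IsLocTrivTorusBundle.isAffine_base [IsIntegral C] [IsAffine P]
    (hp : IsLocTrivTorusBundle n sC p) : IsAffine C := by
  obtain ⟨ρ, hρ1, hρ⟩ := hp.exists_reynolds
  let G : Set Γ(P, ⊤) := {g | ∃ V : C.Opens, IsAffineOpen V ∧ P.basicOpen g ≤ p ⁻¹ᵁ V}
  have hG : Ideal.span G = ⊤ := by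
    rw [← (isAffineOpen_top P).self_le_iSup_basicOpen_iff]
    intro y _
    obtain ⟨V, -, hyV, hV, -⟩ := hp.exists_isAffineOpen (p y)
    obtain ⟨g, hgV, hyg⟩ := (isAffineOpen_top P).exists_basicOpen_le (V := p ⁻¹ᵁ V) ⟨y, hyV⟩ trivial
    exact Opens.mem_iSup.mpr ⟨⟨g, V, hV, hgV⟩, hyg⟩
  let S : Set Γ(C, ⊤) := {f | IsAffineOpen (C.basicOpen f)}
  refine isAffine_of_isAffineOpen_basicOpen S ?_ fun _ h ↦ h
  rw [Ideal.eq_top_iff_one, ← hρ1]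
  suffices h : ∀ x ∈ Submodule.span Γ(P, ⊤) G, ρ x ∈ Ideal.span S from
    h 1 ((Ideal.eq_top_iff_one _).mp hG)
  intro x hx
  induction hx using Submodule.closure_induction with
  | zero => simp
  | add x y _ _ hx hy => rw [map_add]; exact add_mem hx hy
  | smul_mem a g hg =>
    obtain ⟨V, hV, hgV⟩ := hg
    refine Ideal.subset_span (show IsAffineOpen _ from ?_)
    have hle : C.basicOpen (ρ (a • g)) ≤ V := by
      refine (hρ _).trans (Set.image_subset_iff.mpr fun y hy ↦ hgV ?_)
      rw [smul_eq_mul, SetLike.mem_coe, Scheme.basicOpen_mul] at hy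
      exact hy.2
    have := hV.basicOpen (C.presheaf.map (homOfLE le_top).op (ρ (a • g)))
    rwa [Scheme.basicOpen_res, inf_eq_right.mpr hle] at this

end Bundle

/-- The total space of a Zariski locally trivial `𝐓ⁿ`-bundle over an irreducible smooth
complex curve `C` is affine if and only if `C` is affine. -/
theorem torus_bundle_affine_iff_base_affine (n : ℕ)
    {C P : Scheme} (sC : C ⟶ SpecC)
    (hC : IsVarietyOver sC) (hCsm : IsSmooth sC) (hCirr : IrreducibleSpace C)
    (hdim : topologicalKrullDim C = ((1 : ℕ∞) : WithBot ℕ∞))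
    (p : P ⟶ C) (hp : IsLocTrivTorusBundle n sC p) :
    IsAffine P ↔ IsAffine C := by
  have := hC.1
  refine ⟨fun _ ↦ hp.isAffine_base, fun _ ↦ ?_⟩
  have := hp.isAffineHom
  exact isAffine_of_isAffineHom p

end
end
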